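/- arXiv:2412.15782 — 2 statements merged into one kernel-verified Lean document; each statement's English description precedes it below -/
import Mathlib

section
/- For every inverse temperature β ∈ (0,∞) and every range exponent α ∈ (1,2), there exist constants c_β > 0 and C_β < ∞ (depending only on β and α) such that for every integer N ≥ 1, the variance of the height at the origin under the discrete Gaussian long-range chain satisfies c_β ≤ Var_{N,β,α}[φ(0)] ≤ C_β. In particular the chain is localised: the variance remains bounded uniformly in N. -/
noncomputable section

/-- Configurations of the long-range chain of length `N`: integer-valued height functions
on `ℤ` vanishing outside `{-N, …, N}`. -/
def ChainConfig (N : ℕ) : Type :=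
  {φ : ℤ → ℤ // ∀ k : ℤ, (N : ℤ) < |k| → φ k = 0}

/-- Energy `β ∑_{i ≠ j} |φ(i) − φ(j)|^q / |i − j|^α` of a configuration of the long-range
chain with potential exponent `q` and range exponent `α`. -/
def chainEnergy (β α q : ℝ) (φ : ℤ → ℤ) : ℝ :=
  β * ∑' p : ℤ × ℤ,
      if p.1 = p.2 then 0
      else |((φ p.1 - φ p.2 : ℤ) : ℝ)| ^ q / |((p.1 - p.2 : ℤ) : ℝ)| ^ α

/-- Boltzmann weight of a configuration. -/
def chainWeight (β α q : ℝ) (φ : ℤ → ℤ) : ℝ :=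
  Real.exp (-chainEnergy β α q φ)

/-- Partition function of the long-range chain. -/
def chainZ (N : ℕ) (β α q : ℝ) : ℝ :=
  ∑' φ : ChainConfig N, chainWeight β α q φ.val

/-- Mean of the height at the origin. -/
def chainMean (N : ℕ) (β α q : ℝ) : ℝ :=
  (∑' φ : ChainConfig N, ((φ.val 0 : ℤ) : ℝ) * chainWeight β α q φ.val) / chainZ N β α q

/-- Variance of the height at the origin under the long-range chain `μ_{N,β,α}`
(with potential exponent `q`; `q = 2` is the discrete Gaussian chain,
`q ∈ (0,2)` the `q`-SOS chain). -/
def chainVar (N : ℕ) (β α q : ℝ) : ℝ :=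
  (∑' φ : ChainConfig N, ((φ.val 0 : ℤ) : ℝ) ^ 2 * chainWeight β α q φ.val) / chainZ N β α q
    - chainMean N β α q ^ 2

end


set_option linter.unusedSectionVars false

lemma lr_mul_summable {X Y : Type} (f : X → ℝ) (g : Y → ℝ) (hf : Summable f) (hg : Summable g)
    (hf0 : ∀ x, 0 ≤ f x) (hg0 : ∀ x, 0 ≤ g x) : Summable fun p : X × Y => f p.1 * g p.2 :=
  Summable.mul_of_nonneg hf hg hf0 hg0

lemma lr_tsum_mul {X Y : Type} (f : X → ℝ) (g : Y → ℝ) (hf : Summable f) (hg : Summable g)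
    (hf0 : ∀ x, 0 ≤ f x) (hg0 : ∀ x, 0 ≤ g x) :
    (∑' x, f x) * (∑' y, g y) = ∑' p : X × Y, f p.1 * g p.2 :=
  Summable.tsum_mul_tsum hf hg (lr_mul_summable f g hf hg hf0 hg0)

section abstractpart
variable {ι : Type} [Fintype ι] [DecidableEq ι]

def lrPar (φ : ι → ℤ) : ι → ZMod 2 := fun k => (φ k : ZMod 2)

lemma lrPar_eq_iff (s d : ι → ℤ) :
    lrPar s = lrPar d ↔ ∃ p : (ι → ℤ) × (ι → ℤ), (p.1 + p.2, p.1 - p.2) = (s, d) := by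
  constructor
  · intro h
    have h2 : ∀ k, ∃ m, s k - d k = 2 * m := by
      intro k
      have := congrFun h k
      simp only [lrPar] at this
      have h3 := (ZMod.intCast_eq_intCast_iff_dvd_sub _ _ 2).1 this.symm
      exact h3
    choose m hm using h2
    refine ⟨(d + m, m), ?_⟩
    ext k
    · have := hm k
      simp; linarith
    · simp
  · rintro ⟨p, hp⟩
    obtain ⟨rfl, rfl⟩ := Prod.mk.inj hp
    funext k
    simp only [lrPar, Pi.add_apply, Pi.sub_apply]
    rw [ZMod.intCast_eq_intCast_iff_dvd_sub]
    exact ⟨-p.2 k, by push_cast; ring⟩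

noncomputable def lrClass (a : (ι → ℤ) → ℝ) (c : ι → ZMod 2) : ℝ :=
  ∑' s, if lrPar s = c then a s else 0

lemma lrClass_sum (a b : (ι → ℤ) → ℝ) (ha : Summable a) (hb : Summable b)
    (ha0 : ∀ s, 0 ≤ a s) (hb0 : ∀ s, 0 ≤ b s) :
    ∑ c, lrClass a c * lrClass b c
      = ∑' p : (ι → ℤ) × (ι → ℤ), a (p.1 + p.2) * b (p.1 - p.2) := by
  have hind : ∀ (a : (ι → ℤ) → ℝ), Summable a → (∀ s, 0 ≤ a s) → ∀ c,
      Summable (fun s => if lrPar s = c then a s else 0) := by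
    intro a ha ha0 c
    refine Summable.of_nonneg_of_le (fun s => ?_) (fun s => ?_) ha
    · split_ifs <;> simp [ha0]
    · split_ifs <;> simp [ha0]
  have hind0 : ∀ (a : (ι → ℤ) → ℝ), (∀ s, 0 ≤ a s) → ∀ c,
      ∀ s, 0 ≤ (if lrPar s = c then a s else 0) := by
    intro a ha0 c s
    split_ifs <;> simp [ha0]
  have hprod : ∀ c, Summable (fun p : (ι → ℤ) × (ι → ℤ) =>
      (if lrPar p.1 = c then a p.1 else 0) * (if lrPar p.2 = c then b p.2 else 0)) := by
    intro c
    exact lr_mul_summable (fun s => if lrPar s = c then a s else 0)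
      (fun s => if lrPar s = c then b s else 0) (hind a ha ha0 c) (hind b hb hb0 c)
      (hind0 a ha0 c) (hind0 b hb0 c)
  have h1 : ∀ c, lrClass a c * lrClass b c = ∑' p : (ι → ℤ) × (ι → ℤ),
      (if lrPar p.1 = c then a p.1 else 0) * (if lrPar p.2 = c then b p.2 else 0) := by
    intro c
    exact lr_tsum_mul (fun s => if lrPar s = c then a s else 0)
      (fun s => if lrPar s = c then b s else 0) (hind a ha ha0 c) (hind b hb hb0 c)
      (hind0 a ha0 c) (hind0 b hb0 c)
  simp_rw [h1]
  rw [← Summable.tsum_finsetSum (fun c _ => hprod c)]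
  have hinj : Function.Injective
      (fun p : (ι → ℤ) × (ι → ℤ) => (p.1 + p.2, p.1 - p.2)) := by
    intro p q h
    obtain ⟨h1, h2⟩ := Prod.mk.inj h
    ext k
    · have := congrFun h1 k
      have := congrFun h2 k
      simp at *; linarith
    · have := congrFun h1 k
      have := congrFun h2 k
      simp at *; linarith
  have h2 : ∀ p : (ι → ℤ) × (ι → ℤ),
      (∑ c, (if lrPar p.1 = c then a p.1 else 0) * (if lrPar p.2 = c then b p.2 else 0))
      = if lrPar p.1 = lrPar p.2 then a p.1 * b p.2 else 0 := by
    intro p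
    rw [Finset.sum_eq_single (lrPar p.1)]
    · by_cases h : lrPar p.1 = lrPar p.2
      · simp [h]
      · simp [h, Ne.symm h]
    · intro c _ hc
      simp [hc.symm]
    · simp
  simp_rw [h2]
  rw [← hinj.tsum_eq]
  · refine tsum_congr fun p => ?_
    have : lrPar (p.1 + p.2) = lrPar (p.1 - p.2) := (lrPar_eq_iff _ _).2 ⟨p, rfl⟩
    simp [this]
  · intro q hq
    simp only [Function.mem_support, ne_eq, ite_eq_right_iff, not_forall] at hq
    obtain ⟨h, -⟩ := hq
    obtain ⟨p, hp⟩ := (lrPar_eq_iff _ _).1 h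
    exact ⟨p, hp⟩

variable (H : (ι → ℤ) → ℝ) (i0 : ι) (K : ℝ)

noncomputable def lrM (t : ℝ) : ℝ := ∑' φ : ι → ℤ, Real.exp (-H φ + t * (φ i0 : ℝ))

lemma lr_young (hK : 0 < K) (hloc : ∀ φ, ((φ i0 : ℤ) : ℝ) ^ 2 ≤ K * H φ) (c : ℝ) (hc : 0 < c)
    (t : ℝ) (φ : ι → ℤ) : t * (φ i0 : ℝ) ≤ (c / 2) * H φ + t ^ 2 * K / (2 * c) := by
  have h := hloc φ
  have h1 : (c / (2 * K)) * ((φ i0 : ℤ) : ℝ) ^ 2 ≤ (c / 2) * H φ := by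
    calc _ ≤ (c / (2 * K)) * (K * H φ) := by gcongr
      _ = _ := by field_simp
  have h2 : t * (φ i0 : ℝ) ≤ (c / (2 * K)) * ((φ i0 : ℤ) : ℝ) ^ 2 + t ^ 2 * K / (2 * c) := by
    have : 0 ≤ (c * (φ i0 : ℝ) - t * K) ^ 2 / (2 * K * c) := by positivity
    have e : (c * (φ i0 : ℝ) - t * K) ^ 2 / (2 * K * c)
      = (c / (2 * K)) * ((φ i0 : ℤ) : ℝ) ^ 2 + t ^ 2 * K / (2 * c) - t * (φ i0 : ℝ) := by
      field_simp; ring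
    linarith
  linarith

lemma lr_summable (hK : 0 < K) (hloc : ∀ φ, ((φ i0 : ℤ) : ℝ) ^ 2 ≤ K * H φ)
    (hsum : ∀ c : ℝ, 0 < c → Summable fun φ => Real.exp (-(c * H φ)))
    (c : ℝ) (hc : 0 < c) (t : ℝ) :
    Summable fun φ : ι → ℤ => Real.exp (-(c * H φ) + t * (φ i0 : ℝ)) := by
  refine Summable.of_nonneg_of_le (fun _ => (Real.exp_pos _).le) (fun φ => ?_)
    ((hsum (c / 2) (by positivity)).mul_left (Real.exp (t ^ 2 * K / (2 * c))))
  rw [← Real.exp_add]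
  apply Real.exp_le_exp.2
  have := lr_young H i0 K hK hloc c hc t φ
  linarith

lemma lr_four (hK : 0 < K) (hloc : ∀ φ, ((φ i0 : ℤ) : ℝ) ^ 2 ≤ K * H φ)
    (hsum : ∀ c : ℝ, 0 < c → Summable fun φ => Real.exp (-(c * H φ)))
    (hpar : ∀ φ ψ, H (φ + ψ) + H (φ - ψ) = 2 * H φ + 2 * H ψ) (t : ℝ) :
    lrM H i0 t ^ 4 ≤ lrM H i0 (2 * t) * lrM H i0 0 ^ 3 := by
  set a : ℝ → (ι → ℤ) → ℝ := fun t φ => Real.exp (-((1/2) * H φ) + t * (φ i0 : ℝ)) with ha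
  have hsa : ∀ t, Summable (a t) := fun t =>
    lr_summable H i0 K hK hloc hsum (1/2) (by norm_num) t
  have hM : ∀ t, Summable fun φ : ι → ℤ => Real.exp (-H φ + t * (φ i0 : ℝ)) := by
    intro t
    simpa using lr_summable H i0 K hK hloc hsum 1 (by norm_num) t
  have key : ∀ u v, ∑ c, lrClass (a u) c * lrClass (a v) c
      = lrM H i0 (u + v) * lrM H i0 (u - v) := by
    intro u v
    rw [lrClass_sum _ _ (hsa u) (hsa v) (fun _ => (Real.exp_pos _).le)
      (fun _ => (Real.exp_pos _).le)]
    unfold lrM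
    rw [lr_tsum_mul _ _ (hM _) (hM _) (fun _ => (Real.exp_pos _).le)
        (fun _ => (Real.exp_pos _).le)]
    · refine tsum_congr fun p => ?_
      simp only [ha]
      rw [← Real.exp_add, ← Real.exp_add]
      congr 1
      have := hpar p.1 p.2
      simp only [Pi.add_apply, Pi.sub_apply]
      push_cast
      linear_combination (-1/2) * this
  have cs := Finset.sum_mul_sq_le_sq_mul_sq Finset.univ (lrClass (a t)) (lrClass (a 0))
  simp_rw [pow_two] at cs
  rw [key, key, key] at cs
  simp only [add_zero, sub_zero, sub_self, ← two_mul, mul_zero] at cs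
  nlinarith [cs]

lemma lr_mgf (hK : 0 < K) (hloc : ∀ φ, ((φ i0 : ℤ) : ℝ) ^ 2 ≤ K * H φ)
    (hsum : ∀ c : ℝ, 0 < c → Summable fun φ => Real.exp (-(c * H φ)))
    (hpar : ∀ φ ψ, H (φ + ψ) + H (φ - ψ) = 2 * H φ + 2 * H ψ) (t : ℝ) :
    lrM H i0 t ≤ Real.exp (t ^ 2 * K / 2) * lrM H i0 0 := by
  have hM : ∀ t, Summable fun φ : ι → ℤ => Real.exp (-H φ + t * (φ i0 : ℝ)) := by
    intro t
    simpa using lr_summable H i0 K hK hloc hsum 1 (by norm_num) t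
  have hpos : ∀ t, 0 < lrM H i0 t := fun t =>
    (hM t).tsum_pos (fun _ => (Real.exp_pos _).le) 0 (Real.exp_pos _)
  set S := ∑' φ : ι → ℤ, Real.exp (-((1/2) * H φ)) with hS
  have hS1 := hsum (1/2) (by norm_num)
  have hup : ∀ t, lrM H i0 t ≤ Real.exp (t ^ 2 * K / 2) * S := by
    intro t
    rw [hS, ← tsum_mul_left]
    refine (hM t).tsum_le_tsum (fun φ => ?_) (hS1.mul_left _)
    rw [← Real.exp_add]
    apply Real.exp_le_exp.2
    have := lr_young H i0 K hK hloc 1 one_pos t φ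
    linarith
  have h0 := hpos 0
  set r : ℝ → ℝ := fun t => lrM H i0 t / lrM H i0 0 with hr
  have hr0 : ∀ t, 0 < r t := fun t => div_pos (hpos t) h0
  have hr4 : ∀ t, r t ^ 4 ≤ r (2 * t) := by
    intro t
    have := lr_four H i0 K hK hloc hsum hpar t
    simp only [hr]
    rw [div_pow, div_le_div_iff₀ (by positivity) h0]
    calc _ ≤ (lrM H i0 (2 * t) * lrM H i0 0 ^ 3) * lrM H i0 0 := by gcongr
      _ = _ := by ring
  have hit : ∀ k : ℕ, r t ^ (4 ^ k) ≤ r (2 ^ k * t) := by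
    intro k
    induction k with
    | zero => simp
    | succ k ih =>
      calc r t ^ (4 ^ (k+1)) = (r t ^ (4 ^ k)) ^ 4 := by rw [← pow_mul, pow_succ]
        _ ≤ (r (2 ^ k * t)) ^ 4 := by
          have := hr0 t
          gcongr
        _ ≤ _ := by
          refine (hr4 _).trans (le_of_eq ?_)
          congr 1; ring
  by_contra! hcon
  set e := Real.exp (t ^ 2 * K / 2) with he
  have hepos : 0 < e := Real.exp_pos _
  have hq : 1 < r t / e := by
    rw [one_lt_div hepos]
    simp only [hr]
    rw [lt_div_iff₀ h0]; exact hcon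
  obtain ⟨n, hn⟩ := pow_unbounded_of_one_lt (S / lrM H i0 0) hq
  have h4 : (r t / e) ^ n ≤ (r t / e) ^ (4 ^ n) :=
    pow_le_pow_right₀ hq.le (Nat.lt_pow_self (by norm_num)).le
  have h5 : (r t / e) ^ (4 ^ n) ≤ S / lrM H i0 0 := by
    rw [div_pow, div_le_iff₀ (by positivity)]
    refine (hit n).trans ?_
    simp only [hr]
    rw [div_mul_eq_mul_div, div_le_div_iff_of_pos_right h0]
    refine (hup _).trans (le_of_eq ?_)
    rw [mul_comm, he, ← Real.exp_nat_mul]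
    congr 2
    push_cast
    have : (4:ℝ) ^ n = (2 ^ n) ^ 2 := by rw [← pow_mul, mul_comm, pow_mul]; norm_num
    rw [this]; ring
  linarith

lemma lr_sq_bound (x : ℝ) : x ^ 2 ≤ 2 * (Real.exp x + Real.exp (-x)) := by
  have h1 := Real.exp_pos x
  have h2 := Real.exp_pos (-x)
  rcases le_total 0 x with h | h
  · have := Real.quadratic_le_exp_of_nonneg h
    nlinarith
  · have := Real.quadratic_le_exp_of_nonneg (x := -x) (by linarith)
    nlinarith

lemma lr_sq_summable (hK : 0 < K) (hloc : ∀ φ, ((φ i0 : ℤ) : ℝ) ^ 2 ≤ K * H φ)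
    (hsum : ∀ c : ℝ, 0 < c → Summable fun φ => Real.exp (-(c * H φ))) :
    Summable fun φ : ι → ℤ => ((φ i0 : ℤ) : ℝ) ^ 2 * Real.exp (-H φ) := by
  have hM : ∀ t, Summable fun φ : ι → ℤ => Real.exp (-H φ + t * (φ i0 : ℝ)) := by
    intro t
    simpa using lr_summable H i0 K hK hloc hsum 1 (by norm_num) t
  refine Summable.of_nonneg_of_le (fun φ => by positivity) (fun φ => ?_)
    (((hM 1).add (hM (-1))).mul_left 2)
  have := lr_sq_bound (φ i0 : ℝ)
  calc _ ≤ (2 * (Real.exp (φ i0 : ℝ) + Real.exp (-(φ i0 : ℝ)))) * Real.exp (-H φ) := by gcongr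
    _ = _ := by rw [Real.exp_add, Real.exp_add]; simp; ring

lemma lr_upper (hK : 0 < K) (hloc : ∀ φ, ((φ i0 : ℤ) : ℝ) ^ 2 ≤ K * H φ)
    (hsum : ∀ c : ℝ, 0 < c → Summable fun φ => Real.exp (-(c * H φ)))
    (hpar : ∀ φ ψ, H (φ + ψ) + H (φ - ψ) = 2 * H φ + 2 * H ψ) :
    ∑' φ : ι → ℤ, ((φ i0 : ℤ) : ℝ) ^ 2 * Real.exp (-H φ)
      ≤ (4 * Real.exp (K / 2)) * ∑' φ : ι → ℤ, Real.exp (-H φ) := by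
  have hM : ∀ t, Summable fun φ : ι → ℤ => Real.exp (-H φ + t * (φ i0 : ℝ)) := by
    intro t
    simpa using lr_summable H i0 K hK hloc hsum 1 (by norm_num) t
  have h1 := lr_mgf H i0 K hK hloc hsum hpar 1
  have h2 := lr_mgf H i0 K hK hloc hsum hpar (-1)
  have e0 : lrM H i0 0 = ∑' φ : ι → ℤ, Real.exp (-H φ) := by simp [lrM]
  rw [e0] at h1 h2
  have h3 : ∑' φ : ι → ℤ, ((φ i0 : ℤ) : ℝ) ^ 2 * Real.exp (-H φ)
      ≤ 2 * (lrM H i0 1 + lrM H i0 (-1)) := by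
    unfold lrM
    rw [← (hM 1).tsum_add (hM (-1)), ← tsum_mul_left]
    refine (lr_sq_summable H i0 K hK hloc hsum).tsum_le_tsum (fun φ => ?_)
      (((hM 1).add (hM (-1))).mul_left 2)
    have := lr_sq_bound (φ i0 : ℝ)
    calc _ ≤ (2 * (Real.exp (φ i0 : ℝ) + Real.exp (-(φ i0 : ℝ)))) * Real.exp (-H φ) := by gcongr
      _ = _ := by rw [Real.exp_add, Real.exp_add]; simp; ring
  norm_num at h1 h2
  linarith

set_option maxHeartbeats 1000000 in
lemma lr_lower (hK : 0 < K) (hloc : ∀ φ, ((φ i0 : ℤ) : ℝ) ^ 2 ≤ K * H φ)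
    (hsum : ∀ c : ℝ, 0 < c → Summable fun φ => Real.exp (-(c * H φ)))
    (hpar : ∀ φ ψ, H (φ + ψ) + H (φ - ψ) = 2 * H φ + 2 * H ψ) :
    (Real.exp (-H (Pi.single i0 1)) / 2) * ∑' φ : ι → ℤ, Real.exp (-H φ) ≤
    ∑' φ : ι → ℤ, ((φ i0 : ℤ) : ℝ) ^ 2 * Real.exp (-H φ) := by
  set δ : ι → ℤ := Pi.single i0 1 with hδ
  have hδ0 : δ i0 = 1 := by simp [hδ]
  have hδpos : 0 ≤ H δ := by
    have := hloc δ
    by_contra! h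
    nlinarith [sq_nonneg ((δ i0 : ℤ) : ℝ)]
  set g : (ι → ℤ) → ℝ := fun φ => ((φ i0 : ℤ) : ℝ) ^ 2 * Real.exp (-H φ) with hg
  have hgs : Summable g := lr_sq_summable H i0 K hK hloc hsum
  have hM : Summable fun φ : ι → ℤ => Real.exp (-H φ) := by simpa using hsum 1 one_pos
  set D := Real.exp (-H δ) with hD
  have hD1 : D ≤ 1 := Real.exp_le_one_iff.2 (by linarith)
  have hD0 : 0 < D := Real.exp_pos _
  have hp : Summable fun φ => g (φ + δ) := (Equiv.addRight δ).summable_iff.2 hgs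
  have hm : Summable fun φ => g (φ - δ) := (Equiv.subRight δ).summable_iff.2 hgs
  have ep : ∑' φ, g (φ + δ) = ∑' φ, g φ := (Equiv.addRight δ).tsum_eq g
  have em : ∑' φ, g (φ - δ) = ∑' φ, g φ := (Equiv.subRight δ).tsum_eq g
  have hpt : ∀ φ, (2 * D) * Real.exp (-H φ) ≤ (2 * D) * g φ + (g (φ + δ) + g (φ - δ)) := by
    intro φ
    have g0 : ∀ φ, 0 ≤ g φ := fun φ => by simp only [hg]; positivity
    by_cases h : φ i0 = 0
    · have e1 : g (φ + δ) = Real.exp (-H (φ + δ)) := by simp [hg, h, hδ0]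
      have e2 : g (φ - δ) = Real.exp (-H (φ - δ)) := by simp [hg, h, hδ0]
      have e3 : D * Real.exp (-H φ)
          = Real.exp (-H (φ + δ) / 2) * Real.exp (-H (φ - δ) / 2) := by
        rw [hD, ← Real.exp_add, ← Real.exp_add]
        congr 1
        linear_combination (1/2) * hpar φ δ
      have e4 : Real.exp (-H (φ + δ)) = Real.exp (-H (φ + δ) / 2) ^ 2 := by
        rw [← Real.exp_nat_mul]; congr 1; push_cast; ring
      have e5 : Real.exp (-H (φ - δ)) = Real.exp (-H (φ - δ) / 2) ^ 2 := by
        rw [← Real.exp_nat_mul]; congr 1; push_cast; ring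
      rw [e1, e2, mul_assoc, e3, e4, e5]
      have := mul_nonneg (mul_nonneg zero_le_two hD0.le) (g0 φ)
      nlinarith [sq_nonneg (Real.exp (-H (φ + δ) / 2) - Real.exp (-H (φ - δ) / 2))]
    · have h1 : (1:ℝ) ≤ ((φ i0 : ℤ) : ℝ) ^ 2 := by
        have : 1 ≤ (φ i0) ^ 2 := by
          have := sq_pos_of_ne_zero h
          omega
        exact_mod_cast this
      have h2 : Real.exp (-H φ) ≤ g φ := by
        simp only [hg]
        exact le_mul_of_one_le_left (Real.exp_pos _).le h1
      have := mul_le_mul_of_nonneg_left h2 (mul_nonneg zero_le_two hD0.le)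
      linarith [g0 (φ + δ), g0 (φ - δ)]
  have hfin := (hM.mul_left (2 * D)).tsum_le_tsum hpt ((hgs.mul_left (2 * D)).add (hp.add hm))
  rw [(hgs.mul_left (2 * D)).tsum_add (hp.add hm), hp.tsum_add hm, ep, em, tsum_mul_left,
    tsum_mul_left] at hfin
  have hG : 0 ≤ ∑' φ, g φ := tsum_nonneg fun φ => by simp only [hg]; positivity
  have hDG := mul_le_mul_of_nonneg_right hD1 hG
  linarith

lemma lr_even (hpar : ∀ φ ψ, H (φ + ψ) + H (φ - ψ) = 2 * H φ + 2 * H ψ) (φ : ι → ℤ) :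
    H (-φ) = H φ := by
  have h0 := hpar 0 0
  have h1 := hpar 0 φ
  simp at h0 h1
  linarith

lemma lr_mean (hpar : ∀ φ ψ, H (φ + ψ) + H (φ - ψ) = 2 * H φ + 2 * H ψ) :
    ∑' φ : ι → ℤ, ((φ i0 : ℤ) : ℝ) * Real.exp (-H φ) = 0 := by
  have h := (Equiv.neg (ι → ℤ)).tsum_eq (fun φ : ι → ℤ => ((φ i0 : ℤ) : ℝ) * Real.exp (-H φ))
  simp only [Equiv.neg_apply, lr_even H hpar, Pi.neg_apply, Int.cast_neg, neg_mul] at h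
  rw [tsum_neg] at h
  linarith

end abstractpart

lemma lr_pi_summable {ι : Type} [Fintype ι] [DecidableEq ι] (g : ℤ → ℝ) (hg : Summable g)
    (hg0 : ∀ n, 0 ≤ g n) : Summable fun φ : ι → ℤ => ∏ i, g (φ i) := by
  set F : (ι → ℤ) → ℝ := fun φ => ∏ i, g (φ i) with hF
  have hF0 : ∀ φ, 0 ≤ F φ := fun φ => Finset.prod_nonneg fun i _ => hg0 _
  have hbd : ∀ u : Finset (ι → ℤ), ∑ φ ∈ u, F φ ≤ ∏ _i : ι, ∑' n, g n := by
    intro u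
    set t : ι → Finset ℤ := fun i => u.image (fun φ => φ i) with ht
    have hsub : u ⊆ Fintype.piFinset t := by
      intro φ hφ
      rw [Fintype.mem_piFinset]
      intro i
      exact Finset.mem_image_of_mem _ hφ
    have h1 : ∑ φ ∈ u, F φ ≤ ∑ φ ∈ Fintype.piFinset t, F φ :=
      Finset.sum_le_sum_of_subset_of_nonneg hsub (fun φ _ _ => hF0 φ)
    have h2 : ∑ φ ∈ Fintype.piFinset t, F φ = ∏ i, ∑ n ∈ t i, g n :=
      (Finset.prod_univ_sum t (fun _ n => g n)).symm
    have h3 : ∏ i, ∑ n ∈ t i, g n ≤ ∏ _i : ι, ∑' n, g n := by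
      apply Finset.prod_le_prod
      · intro i _
        exact Finset.sum_nonneg fun n _ => hg0 n
      · intro i _
        exact hg.sum_le_tsum _ (fun n _ => hg0 n)
    exact h1.trans (h2.le.trans h3)
  clear_value F
  exact summable_of_sum_le hF0 hbd

lemma lr_gauss_summable (c : ℝ) (hc : 0 < c) :
    Summable fun n : ℤ => Real.exp (-(c * (n : ℝ) ^ 2)) := by
  have h : Summable fun n : ℕ => Real.exp (-(c * (n : ℝ) ^ 2)) := by
    have h1 : Summable fun n : ℕ => Real.exp (n * (-c)) :=
      Real.summable_exp_nat_mul_iff.2 (by linarith)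
    refine Summable.of_nonneg_of_le (fun _ => (Real.exp_pos _).le) (fun n => ?_) h1
    apply Real.exp_le_exp.2
    have : (n : ℝ) ≤ (n : ℝ) ^ 2 := by exact_mod_cast Nat.le_self_pow two_ne_zero n
    nlinarith
  exact Summable.of_nat_of_neg (by simpa using h) (by simpa using h)

noncomputable def lrT (α : ℝ) (φ : ℤ → ℤ) (p : ℤ × ℤ) : ℝ :=
  ((φ p.1 : ℝ) - φ p.2) ^ 2 * |((p.1 - p.2 : ℤ) : ℝ)| ^ (-α)

noncomputable def lrE (α : ℝ) (φ : ℤ → ℤ) : ℝ := ∑' p, lrT α φ p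

lemma lrT_nonneg (α : ℝ) (φ : ℤ → ℤ) (p : ℤ × ℤ) : 0 ≤ lrT α φ p := by
  unfold lrT; positivity

lemma lrT_summable (α : ℝ) (hα : 1 < α) (φ : ℤ → ℤ) (hφ : φ.support.Finite) :
    Summable (lrT α φ) := by
  have h1 : Summable fun n : ℤ => |(n : ℝ)| ^ (-α) := Real.summable_abs_int_rpow hα
  have h2 : Summable fun n : ℤ => 2 * (φ n : ℝ) ^ 2 := by
    apply summable_of_hasFiniteSupport
    refine hφ.subset ?_
    intro n hn h
    simp at hn
    exact hn h
  have h3 : Summable fun p : ℤ × ℤ => 2 * (φ p.1 : ℝ) ^ 2 * |(p.2 : ℝ)| ^ (-α) :=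
    Summable.mul_of_nonneg h2 h1 (fun n => by positivity) (fun n => by positivity)
  have i1 : Function.Injective (fun p : ℤ × ℤ => (p.1, p.1 - p.2)) := by
    intro p q h
    simp only [Prod.mk.injEq] at h
    ext <;> omega
  have i2 : Function.Injective (fun p : ℤ × ℤ => (p.2, p.1 - p.2)) := by
    intro p q h
    simp only [Prod.mk.injEq] at h
    ext <;> omega
  refine Summable.of_nonneg_of_le (lrT_nonneg α φ) (fun p => ?_)
    ((h3.comp_injective i1).add (h3.comp_injective i2))
  simp only [Function.comp, lrT]
  rw [← add_mul]
  gcongr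
  nlinarith [sq_nonneg ((φ p.1 : ℝ) + φ p.2)]

lemma lrE_par (α : ℝ) (hα : 1 < α) (φ ψ : ℤ → ℤ) (hφ : φ.support.Finite)
    (hψ : ψ.support.Finite) :
    lrE α (φ + ψ) + lrE α (φ - ψ) = 2 * lrE α φ + 2 * lrE α ψ := by
  have s1 := lrT_summable α hα φ hφ
  have s2 := lrT_summable α hα ψ hψ
  have s3 := lrT_summable α hα (φ + ψ)
    ((hφ.union hψ).subset (Function.support_add φ ψ))
  have s4 := lrT_summable α hα (φ - ψ)
    ((hφ.union hψ).subset (Function.support_sub φ ψ))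
  unfold lrE
  rw [← s3.tsum_add s4, ← tsum_mul_left, ← tsum_mul_left,
    ← (s1.mul_left 2).tsum_add (s2.mul_left 2)]
  refine tsum_congr fun p => ?_
  simp only [lrT, Pi.add_apply, Pi.sub_apply]
  push_cast
  ring

lemma lr_energy (β α : ℝ) (φ : ℤ → ℤ) : 
   (β * ∑' p : ℤ × ℤ,
      if p.1 = p.2 then 0
      else |((φ p.1 - φ p.2 : ℤ) : ℝ)| ^ (2:ℝ) / |((p.1 - p.2 : ℤ) : ℝ)| ^ α) = β * lrE α φ := by
  unfold lrE lrT
  congr 1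
  refine tsum_congr fun p => ?_
  split_ifs with h
  · simp [h]
  · rw [Real.rpow_neg (abs_nonneg _), Real.rpow_two, sq_abs, div_eq_mul_inv]
    push_cast
    rfl

/-- block average -/
noncomputable def lrAvg (φ : ℤ → ℤ) (k : ℕ) : ℝ :=
  (∑ i ∈ Finset.range (2 ^ k), (φ i : ℝ)) / 2 ^ k

lemma lrAvg_step (α : ℝ) (hα : 1 < α) (φ : ℤ → ℤ) (hφ : φ.support.Finite) (k : ℕ) :
    (lrAvg φ k - lrAvg φ (k + 1)) ^ 2
      ≤ ((2:ℝ) ^ α / 2) * ((2:ℝ) ^ α / 4) ^ k * lrE α φ := by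
  set s := Finset.range (2 ^ k) ×ˢ Finset.range (2 ^ (k + 1)) with hs
  have hcard : (s.card : ℝ) = 2 * 4 ^ k := by
    rw [hs, Finset.card_product]
    simp
    rw [pow_succ, show (4:ℝ) = 2 * 2 by norm_num, mul_pow]; ring
  have h1 : lrAvg φ k - lrAvg φ (k + 1)
      = (∑ p ∈ s, ((φ p.1 : ℝ) - φ p.2)) / (2 * 4 ^ k) := by
    rw [hs, Finset.sum_product]
    simp only [Finset.sum_sub_distrib, Finset.sum_const, Finset.card_range, nsmul_eq_mul,
      ← Finset.mul_sum, lrAvg]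
    push_cast
    rw [show (4:ℝ) = 2 * 2 by norm_num, mul_pow, pow_succ]
    field_simp
    ring
  have h2 := sq_sum_le_card_mul_sum_sq (s := s) (f := fun p : ℕ × ℕ => ((φ p.1 : ℝ) - φ p.2))
  have h3 : ∑ p ∈ s, ((φ p.1 : ℝ) - φ p.2) ^ 2 ≤ ((2:ℝ) ^ α) ^ (k + 1) * lrE α φ := by
    have hinj : Function.Injective (fun p : ℕ × ℕ => ((p.1 : ℤ), (p.2 : ℤ))) := by
      intro p q h
      simp only [Prod.mk.injEq, Nat.cast_inj] at h
      exact Prod.ext h.1 h.2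
    have h4 : ∑ p ∈ s, lrT α φ ((p.1 : ℤ), (p.2 : ℤ)) ≤ lrE α φ := by
      have := (lrT_summable α hα φ hφ).sum_le_tsum (s.map ⟨_, hinj⟩)
        (fun p _ => lrT_nonneg α φ p)
      rw [Finset.sum_map] at this
      exact this
    calc _ ≤ ∑ p ∈ s, ((2:ℝ) ^ α) ^ (k + 1) * lrT α φ ((p.1 : ℤ), (p.2 : ℤ)) := by
          refine Finset.sum_le_sum fun p hp => ?_
          by_cases hne : p.1 = p.2
          · rw [hne]; simp [lrT]
          simp only [lrT]
          set D := |(((p.1 : ℤ) - (p.2 : ℤ) : ℤ) : ℝ)| with hD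
          have hD0 : 0 < D := by
            rw [hD, abs_pos]
            have : (p.1 : ℤ) - p.2 ≠ 0 := by omega
            exact_mod_cast this
          have hDle : D ≤ (2:ℝ) ^ (k + 1) := by
            rw [hs, Finset.mem_product, Finset.mem_range, Finset.mem_range] at hp
            have hk : 2 ^ k ≤ 2 ^ (k + 1) := Nat.pow_le_pow_right (by norm_num) (by omega)
            have : |(p.1 : ℤ) - (p.2 : ℤ)| ≤ ((2 ^ (k + 1) : ℕ) : ℤ) := by
              rw [abs_le]; constructor <;> omega
            rw [hD]
            exact_mod_cast this
          have hpow : D ^ α ≤ ((2:ℝ) ^ α) ^ (k + 1) := by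
            calc D ^ α ≤ ((2:ℝ) ^ (k + 1)) ^ α := Real.rpow_le_rpow hD0.le hDle (by linarith)
              _ = _ := by
                rw [← Real.rpow_natCast, ← Real.rpow_natCast, ← Real.rpow_mul (by norm_num),
                  ← Real.rpow_mul (by norm_num), mul_comm]
          have h1 : 1 ≤ ((2:ℝ) ^ α) ^ (k + 1) * D ^ (-α) := by
            rw [Real.rpow_neg hD0.le, ← div_eq_mul_inv, one_le_div (by positivity)]
            exact hpow
          calc _ = ((φ p.1 : ℝ) - φ p.2) ^ 2 * 1 := by ring
            _ ≤ ((φ p.1 : ℝ) - φ p.2) ^ 2 * (((2:ℝ) ^ α) ^ (k + 1) * D ^ (-α)) := by gcongr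
            _ = _ := by ring
      _ = ((2:ℝ) ^ α) ^ (k + 1) * ∑ p ∈ s, lrT α φ ((p.1 : ℤ), (p.2 : ℤ)) := by
          rw [Finset.mul_sum]
      _ ≤ _ := by gcongr
  rw [h1, div_pow, div_le_iff₀ (by positivity)]
  rw [hcard] at h2
  refine h2.trans ?_
  calc _ ≤ (2 * 4 ^ k) * (((2:ℝ) ^ α) ^ (k + 1) * lrE α φ) := by gcongr
    _ = _ := by
      rw [div_pow]; field_simp; ring

lemma lrAvg_tendsto (φ : ℤ → ℤ) (hφ : φ.support.Finite) :
    Filter.Tendsto (lrAvg φ) Filter.atTop (nhds 0) := by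
  have hs : Summable fun n : ℕ => |(φ n : ℝ)| := by
    apply summable_of_hasFiniteSupport
    refine (hφ.preimage (Nat.cast_injective (R := ℤ)).injOn).subset ?_
    intro n hn
    simpa using hn
  set S := ∑' n : ℕ, |(φ n : ℝ)|
  have h1 : Filter.Tendsto (fun k : ℕ => S * (1/2 : ℝ) ^ k) Filter.atTop (nhds 0) := by
    simpa using (tendsto_pow_atTop_nhds_zero_of_lt_one (r := (1/2:ℝ)) (by norm_num)
      (by norm_num)).const_mul S
  refine squeeze_zero_norm (fun k => ?_) h1
  rw [lrAvg, Real.norm_eq_abs, abs_div, abs_of_pos (by positivity : (0:ℝ) < 2 ^ k), one_div,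
    inv_pow, ← div_eq_mul_inv]
  gcongr
  exact (Finset.abs_sum_le_sum_abs _ _).trans (hs.sum_le_tsum _ (fun _ _ => abs_nonneg _))

lemma lr_local (α : ℝ) (hα : 1 < α) (hα₂ : α < 2) :
    ∃ K : ℝ, 0 < K ∧ ∀ φ : ℤ → ℤ, φ.support.Finite → (φ 0 : ℝ) ^ 2 ≤ K * lrE α φ := by
  set B := (2:ℝ) ^ α with hB
  have hB0 : 0 < B := by positivity
  have hB4 : B < 4 := by
    calc B < (2:ℝ) ^ (2:ℝ) := Real.rpow_lt_rpow_of_exponent_lt (by norm_num) hα₂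
      _ = 4 := by norm_num
  set r := √(B / 4) with hr
  have hr1 : r < 1 := by
    rw [hr, Real.sqrt_lt' one_pos]; linarith
  refine ⟨(B / 2) / (1 - r) ^ 2, div_pos (by positivity) (pow_pos (by linarith) 2),
    fun φ hφ => ?_⟩
  have hE : 0 ≤ lrE α φ := tsum_nonneg (lrT_nonneg α φ)
  have hstep : ∀ k, dist (lrAvg φ k) (lrAvg φ (k + 1)) ≤ √(B / 2 * lrE α φ) * r ^ k := by
    intro k
    rw [Real.dist_eq]
    apply abs_le_of_sq_le_sq _ (by positivity)
    refine (lrAvg_step α hα φ hφ k).trans (le_of_eq ?_)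
    rw [mul_pow, Real.sq_sqrt (by positivity), ← pow_mul, mul_comm k 2, pow_mul, hr,
      Real.sq_sqrt (by positivity)]
    ring
  have h := dist_le_of_le_geometric_of_tendsto₀ r _ hr1 hstep (lrAvg_tendsto φ hφ)
  have h0 : lrAvg φ 0 = φ 0 := by simp [lrAvg]
  rw [h0, Real.dist_eq, sub_zero] at h
  calc (φ 0 : ℝ) ^ 2 = |(φ 0 : ℝ)| ^ 2 := (sq_abs _).symm
    _ ≤ (√(B / 2 * lrE α φ) / (1 - r)) ^ 2 := by gcongr
    _ = _ := by
      rw [div_pow, Real.sq_sqrt (by positivity)]; ring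

abbrev lrI (N : ℕ) : Type := ↥(Finset.Icc (-(N : ℤ)) (N : ℤ))

noncomputable def lrExt (N : ℕ) (φ : lrI N → ℤ) : ℤ → ℤ := fun k =>
  if h : k ∈ Finset.Icc (-(N : ℤ)) (N : ℤ) then φ ⟨k, h⟩ else 0

lemma lrExt_of (N : ℕ) (φ : lrI N → ℤ) (i : lrI N) : lrExt N φ i = φ i := by
  have := i.2
  simp [lrExt]

lemma lrExt_support (N : ℕ) (φ : lrI N → ℤ) : (lrExt N φ).support.Finite := by
  refine (Finset.Icc (-(N : ℤ)) (N : ℤ)).finite_toSet.subset ?_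
  intro k hk
  by_contra h
  exact hk (dif_neg h)

lemma lrExt_add (N : ℕ) (φ ψ : lrI N → ℤ) : lrExt N (φ + ψ) = lrExt N φ + lrExt N ψ := by
  funext k
  simp only [lrExt, Pi.add_apply]
  split_ifs <;> simp

lemma lrExt_sub (N : ℕ) (φ ψ : lrI N → ℤ) : lrExt N (φ - ψ) = lrExt N φ - lrExt N ψ := by
  funext k
  simp only [lrExt, Pi.sub_apply]
  split_ifs <;> simp

noncomputable def lrEquiv (N : ℕ) : (lrI N → ℤ) ≃ ChainConfig N where
  toFun φ := ⟨lrExt N φ, fun k hk => by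
    apply dif_neg
    rw [Finset.mem_Icc, ← abs_le]
    omega⟩
  invFun φ := fun i => φ.1 i
  left_inv φ := by
    funext i
    exact lrExt_of N φ i
  right_inv φ := by
    apply Subtype.ext
    funext k
    simp only [lrExt]
    split_ifs with h
    · rfl
    · rw [Finset.mem_Icc, ← abs_le] at h
      exact (φ.2 k (by omega)).symm

def lrZero (N : ℕ) : lrI N := ⟨0, by simp⟩

lemma lrExt_single (N : ℕ) : lrExt N (Pi.single (lrZero N) 1) = Pi.single 0 1 := by
  funext k
  by_cases hk : k = 0
  · subst hk
    have := lrExt_of N (Pi.single (lrZero N) 1) (lrZero N)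
    simpa [lrZero] using this
  · simp only [lrExt]
    split_ifs with h
    · rw [Pi.single_eq_of_ne, Pi.single_eq_of_ne hk]
      intro h'
      exact hk (congrArg Subtype.val h')
    · rw [Pi.single_eq_of_ne hk]

lemma lrE_coercive (α : ℝ) (hα : 1 < α) (N : ℕ) (φ : lrI N → ℤ) (i : lrI N) :
    (φ i : ℝ) ^ 2 * ((2 * N + 1 : ℝ) ^ (-α)) ≤ lrE α (lrExt N φ) := by
  have h := (lrT_summable α hα _ (lrExt_support N φ)).le_tsum ((i : ℤ), (N : ℤ) + 1)
    (fun p _ => lrT_nonneg α _ p)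
  refine le_trans ?_ h
  have e : lrExt N φ ((N : ℤ) + 1) = 0 := dif_neg (by simp)
  simp only [lrT, e, lrExt_of]
  have hi := Finset.mem_Icc.1 i.2
  simp only [Int.cast_zero, sub_zero]
  refine mul_le_mul_of_nonneg_left ?_ (sq_nonneg _)
  apply Real.rpow_le_rpow_of_nonpos
  · rw [abs_pos]
    have : (i : ℤ) - ((N : ℤ) + 1) ≠ 0 := by omega
    exact_mod_cast this
  · have : |(i : ℤ) - ((N : ℤ) + 1)| ≤ 2 * N + 1 := by
      rw [abs_le]; constructor <;> omega
    exact_mod_cast this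
  · linarith

lemma lrE_exp_summable (α : ℝ) (hα : 1 < α) (N : ℕ) (c : ℝ) (hc : 0 < c) :
    Summable fun φ : lrI N → ℤ => Real.exp (-(c * lrE α (lrExt N φ))) := by
  set m : ℝ := (Fintype.card (lrI N) : ℝ) with hm
  have hm0 : 0 < m := by
    rw [hm]
    exact_mod_cast Fintype.card_pos_iff.2 ⟨lrZero N⟩
  set b : ℝ := (2 * N + 1 : ℝ) ^ (-α) with hb
  have hb0 : 0 < b := by positivity
  have h := lr_pi_summable (ι := lrI N) _ (lr_gauss_summable (c * b / m) (by positivity))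
    (fun n => (Real.exp_pos _).le)
  refine Summable.of_nonneg_of_le (fun _ => (Real.exp_pos _).le) (fun φ => ?_) h
  rw [← Real.exp_sum]
  apply Real.exp_le_exp.2
  rw [Finset.sum_neg_distrib, neg_le_neg_iff]
  have h2 : ∀ i ∈ (Finset.univ : Finset (lrI N)),
      c * b / m * (φ i : ℝ) ^ 2 ≤ c / m * lrE α (lrExt N φ) := by
    intro i _
    have := lrE_coercive α hα N φ i
    calc c * b / m * (φ i : ℝ) ^ 2 = c / m * ((φ i : ℝ) ^ 2 * b) := by ring
      _ ≤ _ := by gcongr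
  refine (Finset.sum_le_card_nsmul _ _ _ h2).trans (le_of_eq ?_)
  rw [Finset.card_univ, nsmul_eq_mul, ← hm]
  field_simp

/-- **Localisation of the discrete Gaussian long-range chain for `α ∈ (1,2)`.**
For every `β ∈ (0,∞)` and every `α ∈ (1,2)` there exist constants `c_β > 0` and
`C_β < ∞` such that for every `N ≥ 1`,
`c_β ≤ Var_{N,β,α}[φ(0)] ≤ C_β`. -/
theorem gaussian_chain_localised_of_alpha_lt_two
    (β : ℝ) (hβ : 0 < β) (α : ℝ) (hα₁ : 1 < α) (hα₂ : α < 2) :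
    ∃ c C : ℝ, 0 < c ∧
      ∀ N : ℕ, 1 ≤ N →
        c ≤ chainVar N β α 2 ∧ chainVar N β α 2 ≤ C := by
  obtain ⟨K, hK, hloc⟩ := lr_local α hα₁ hα₂
  refine ⟨Real.exp (-(β * lrE α (Pi.single 0 1))) / 2, 4 * Real.exp ((K / β) / 2),
    by positivity, fun N _ => ?_⟩
  set H : (lrI N → ℤ) → ℝ := fun φ => β * lrE α (lrExt N φ) with hH
  have hw : ∀ φ, chainWeight β α 2 ((lrEquiv N φ).val) = Real.exp (-H φ) := by
    intro φ
    unfold chainWeight chainEnergy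
    rw [lr_energy]
    rfl
  have h0 : ∀ φ, (lrEquiv N φ).val 0 = φ (lrZero N) := fun φ => lrExt_of N φ (lrZero N)
  have hpar : ∀ φ ψ, H (φ + ψ) + H (φ - ψ) = 2 * H φ + 2 * H ψ := by
    intro φ ψ
    have := lrE_par α hα₁ _ _ (lrExt_support N φ) (lrExt_support N ψ)
    simp only [hH, lrExt_add, lrExt_sub]
    linear_combination β * this
  have hloc' : ∀ φ, ((φ (lrZero N) : ℤ) : ℝ) ^ 2 ≤ (K / β) * H φ := by
    intro φ
    have := hloc _ (lrExt_support N φ)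
    rw [show lrExt N φ 0 = φ (lrZero N) from h0 φ] at this
    refine this.trans (le_of_eq ?_)
    simp only [hH]
    field_simp
  have hsum : ∀ c : ℝ, 0 < c → Summable fun φ => Real.exp (-(c * H φ)) := by
    intro c hc
    have := lrE_exp_summable α hα₁ N (c * β) (by positivity)
    simpa only [hH, mul_assoc] using this
  have hK' : 0 < K / β := by positivity
  have hZ : chainZ N β α 2 = ∑' φ, Real.exp (-H φ) := by
    unfold chainZ
    rw [← (lrEquiv N).tsum_eq]
    exact tsum_congr hw
  have hZ0 : 0 < chainZ N β α 2 := by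
    rw [hZ]
    have : Summable fun φ => Real.exp (-H φ) := by simpa using hsum 1 one_pos
    exact this.tsum_pos (fun _ => (Real.exp_pos _).le) 0 (Real.exp_pos _)
  have hmean : chainMean N β α 2 = 0 := by
    unfold chainMean
    rw [← (lrEquiv N).tsum_eq]
    simp_rw [hw, h0]
    rw [lr_mean H (lrZero N) hpar, zero_div]
  have hvar : chainVar N β α 2
      = (∑' φ, ((φ (lrZero N) : ℤ) : ℝ) ^ 2 * Real.exp (-H φ)) / chainZ N β α 2 := by
    unfold chainVar
    rw [hmean, ← (lrEquiv N).tsum_eq]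
    simp_rw [hw, h0]
    simp
  have hlow := lr_lower H (lrZero N) (K / β) hK' hloc' hsum hpar
  have hupp := lr_upper H (lrZero N) (K / β) hK' hloc' hsum hpar
  have hs : H (Pi.single (lrZero N) 1) = β * lrE α (Pi.single 0 1) := by
    simp only [hH, lrExt_single]
  rw [hs, ← hZ] at hlow
  rw [← hZ] at hupp
  rw [hvar]
  exact ⟨(le_div_iff₀ hZ0).2 hlow, (div_le_iff₀ hZ0).2 hupp⟩
end

section
/- There exists β₀ > 0 such that for every inverse temperature β ∈ (0,β₀), there exist constants c_β > 0 and C_β < ∞ such that for every integer N ≥ 2, the variance of the height at the origin under the discrete Gaussian long-range chain with range exponent α = 2 satisfies c_β ln N ≤ Var_{N,β,2}[φ(0)] ≤ C_β ln N. -/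
/-! ### Part A: positive definite functions and the Ginibre inequality -/

/-- positive definite function on a group -/
def PDF {H : Type*} [AddCommGroup H] (F : H → ℝ) : Prop :=
  (Matrix.of fun i j : H => F (i - j)).PosSemidef

theorem PDF.finset {H : Type*} [AddCommGroup H] {F : H → ℝ} (hF : PDF F) (c : H → ℝ) (T : Finset H) :
    0 ≤ ∑ i ∈ T, ∑ j ∈ T, c i * c j * F (i - j) := by
  classical
  have := hF.2 (Finsupp.onFinset T (fun i => if i ∈ T then c i else 0) (by
    intro i hi; by_contra h; simp [h] at hi))
  rw [Finsupp.onFinset_sum] at this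
  · refine this.trans_eq ?_
    refine Finset.sum_congr rfl fun i hi => ?_
    rw [Finsupp.onFinset_sum]
    · refine Finset.sum_congr rfl fun j hj => ?_
      simp [hi, hj]; ring
    · simp
  · simp

theorem PDF.mul {H : Type*} [AddCommGroup H] {F G : H → ℝ} (hF : PDF F) (hG : PDF G) :
    PDF (fun h => F h * G h) := by
  have := Matrix.PosSemidef.hadamard hF hG
  exact this

theorem PDF.comp {H H' : Type*} [AddCommGroup H] [AddCommGroup H'] {F : H → ℝ} (hF : PDF F)
    (f : H' →+ H) : PDF (fun h => F (f h)) := by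
  have := Matrix.PosSemidef.submatrix hF f
  unfold PDF
  convert this using 1
  ext i j
  simp [Matrix.submatrix]

theorem PDF.one {H : Type*} [AddCommGroup H] : PDF (fun _ : H => (1:ℝ)) := by
  refine ⟨by ext; simp, fun x => ?_⟩
  have : (x.sum fun i xi ↦ x.sum fun j xj ↦ star xi * (Matrix.of fun _ _ : H => (1:ℝ)) i j * xj)
      = (x.sum fun i xi => xi) * (x.sum fun i xi => xi) := by
    simp [Finsupp.sum, Finset.sum_mul_sum]
  rw [this]; exact mul_self_nonneg _

theorem PDF.prod {H ι : Type*} [AddCommGroup H] (s : Finset ι) {F : ι → H → ℝ}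
    (hF : ∀ i, PDF (F i)) : PDF (fun h => ∏ i ∈ s, F i h) := by
  classical
  induction s using Finset.induction_on with
  | empty => simpa using PDF.one
  | insert a s ha ih =>
    simp only [Finset.prod_insert ha]
    exact (hF a).mul ih

theorem psd_pow {H : Type*} {K : Matrix H H ℝ} (hK : K.PosSemidef) (n : ℕ) :
    (Matrix.of fun i j : H => K i j ^ n).PosSemidef := by
  induction n with
  | zero =>
    refine ⟨by ext; simp, fun x => ?_⟩
    have : (x.sum fun i xi ↦ x.sum fun j xj ↦ star xi * (Matrix.of fun i j : H => K i j ^ 0) i j * xj)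
        = (x.sum fun i xi => xi) * (x.sum fun i xi => xi) := by
      simp [Finsupp.sum, Finset.sum_mul_sum]
    rw [this]; exact mul_self_nonneg _
  | succ n ih =>
    have := Matrix.PosSemidef.hadamard ih hK
    have e : (Matrix.of fun i j : H => K i j ^ (n+1)) = Matrix.hadamard (Matrix.of fun i j : H => K i j ^ n) K := by
      ext i j; simp [Matrix.hadamard, pow_succ]
    rw [e]; exact this

theorem psd_exp {H : Type*} {K : Matrix H H ℝ} (hK : K.PosSemidef) :
    (Matrix.of fun i j : H => Real.exp (K i j)).PosSemidef := by
  refine ⟨?_, fun x => ?_⟩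
  · ext i j
    have := hK.1.apply i j
    simp at this
    simp [this]
  · have h1 : HasSum (fun n : ℕ => x.sum fun i xi ↦ x.sum fun j xj ↦
        star xi * (K i j ^ n / n.factorial) * xj)
        (x.sum fun i xi ↦ x.sum fun j xj ↦ star xi * Real.exp (K i j) * xj) := by
      simp only [Finsupp.sum]
      refine hasSum_sum fun i _ => hasSum_sum fun j _ => ?_
      refine HasSum.mul_right _ (HasSum.mul_left _ ?_)
      rw [Real.exp_eq_exp_ℝ]
      exact NormedSpace.expSeries_div_hasSum_exp _
    refine h1.nonneg fun n => ?_
    have h2 := (psd_pow hK n).2 x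
    have : (x.sum fun i xi ↦ x.sum fun j xj ↦ star xi * (K i j ^ n / n.factorial) * xj)
       = (x.sum fun i xi ↦ x.sum fun j xj ↦ star xi * (Matrix.of fun i j : H => K i j ^ n) i j * xj) / n.factorial := by
      simp only [Finsupp.sum, Finset.sum_div]
      refine Finset.sum_congr rfl fun i _ => Finset.sum_congr rfl fun j _ => ?_
      simp; ring
    rw [this]
    positivity

/-- Gaussians of nonnegative quadratic forms are positive definite. -/
theorem PDF.gauss {H E : Type*} [AddCommGroup H] [AddCommGroup E] [Module ℝ E]
    (R : QuadraticForm ℝ E) (hR : ∀ x, 0 ≤ R x) (j : H →+ E) :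
    PDF (fun h => Real.exp (-R (j h))) := by
  have hK : (Matrix.of fun a b : H => QuadraticMap.polar R (j a) (j b)).PosSemidef := by
    refine ⟨by ext a b; simp [QuadraticMap.polar_comm], fun x => ?_⟩
    have : (x.sum fun i xi ↦ x.sum fun k xk ↦ star xi *
        (Matrix.of fun a b : H => QuadraticMap.polar R (j a) (j b)) i k * xk)
        = QuadraticMap.polar R (∑ i ∈ x.support, x i • j i) (∑ i ∈ x.support, x i • j i) := by
      rw [← QuadraticMap.polarBilin_apply_apply]
      simp only [map_sum, LinearMap.sum_apply, map_smul, LinearMap.smul_apply, smul_eq_mul, Finsupp.sum]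
      rw [Finset.sum_comm]
      refine Finset.sum_congr rfl fun i _ => ?_
      rw [Finset.mul_sum]
      refine Finset.sum_congr rfl fun k _ => ?_
      simp; ring
    rw [this, QuadraticMap.polar_self]
    have := hR (∑ i ∈ x.support, x i • j i)
    simp; linarith
  have h2 := psd_exp hK
  refine ⟨?_, fun x => ?_⟩
  · ext a b
    have : R (j a - j b) = R (j b - j a) := by rw [← QuadraticMap.map_neg]; simp
    simp [this]
  · have h3 := h2.2 (Finsupp.onFinset x.support (fun i => x i * Real.exp (-R (j i))) (by
      intro i hi; by_contra h; simp at h; simp [h] at hi))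
    rw [Finsupp.onFinset_sum] at h3
    · refine h3.trans_eq ?_
      refine Finset.sum_congr rfl fun i hi => ?_
      rw [Finsupp.onFinset_sum]
      · refine Finset.sum_congr rfl fun k hk => ?_
        have h4 : R (j i - j k) = R (j i) + R (j k) - QuadraticMap.polar R (j i) (j k) := by
          have := QuadraticMap.map_add R (j i) (-j k)
          rw [QuadraticMap.polar_neg_right] at this
          rw [sub_eq_add_neg, this]; simp; ring
        simp only [star_trivial, Matrix.of_apply, map_sub, h4]
        rw [show -(R (j i) + R (j k) - QuadraticMap.polar R (j i) (j k)) =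
          -R (j i) + -R (j k) + QuadraticMap.polar R (j i) (j k) by ring, Real.exp_add, Real.exp_add]
        ring
      · simp
    · simp

theorem tsum_square_nonneg {H : Type*} (G : H × H → ℝ)
    (hT : ∀ T : Finset H, 0 ≤ ∑ p ∈ T ×ˢ T, G p) : 0 ≤ ∑' p, G p := by
  classical
  by_cases hG : Summable G
  · have h1 : Filter.Tendsto (fun T : Finset H => T ×ˢ T) Filter.atTop Filter.atTop := by
      refine Filter.tendsto_atTop.2 fun U => ?_
      refine Filter.eventually_atTop.2 ⟨U.image Prod.fst ∪ U.image Prod.snd, fun T hT p hp => ?_⟩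
      simp only [Finset.mem_product]
      exact ⟨hT (Finset.mem_union_left _ (Finset.mem_image_of_mem _ hp)),
        hT (Finset.mem_union_right _ (Finset.mem_image_of_mem _ hp))⟩
    exact ge_of_tendsto' (Filter.Tendsto.comp hG.hasSum h1) hT
  · rw [tsum_eq_zero_of_not_summable hG]

theorem ginibre_pos {V H : Type*} [AddCommGroup V] [AddCommGroup H] (ι : H →+ V)
    (hι : Function.Injective fun h => ι h + ι h)
    (a : V → ℝ) (ha : Summable fun v => |a v|) (F : H → ℝ) (hF : PDF F) (hb : ∀ h, |F h| ≤ 1) :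
    0 ≤ ∑' p : V × H, a p.1 * a (p.1 - (ι p.2 + ι p.2)) * F p.2 := by
  classical
  have hsum : Summable fun p : V × H => a p.1 * a (p.1 - (ι p.2 + ι p.2)) * F p.2 := by
    have h1 : Summable fun p : V × V => |a p.1| * |a p.2| :=
      ha.mul_of_nonneg ha (fun _ => abs_nonneg _) (fun _ => abs_nonneg _)
    have h2 : Function.Injective fun p : V × H => ((p.1, p.1 - (ι p.2 + ι p.2)) : V × V) := by
      rintro ⟨u, h⟩ ⟨u', h'⟩ e
      simp only [Prod.mk.injEq] at e
      obtain ⟨rfl, e⟩ := e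
      have := hι (sub_right_injective e)
      simp [this]
    refine Summable.of_norm_bounded (h1.comp_injective h2) fun p => ?_
    simp only [Real.norm_eq_abs, abs_mul, Function.comp]
    exact mul_le_of_le_one_right (by positivity) (hb _)
  let f : H →+ V := ι + ι
  have hf : Function.Injective f := hι
  let D : AddSubgroup V := f.range
  have hbij : Function.Bijective fun q : (V ⧸ D) × H => (Quotient.out q.1 + f q.2 : V) := by
    have hmk : ∀ c : V ⧸ D, ∀ s, ((Quotient.out c + f s : V) : V ⧸ D) = c := by
      intro c s
      have h0 : ((f s : V) : V ⧸ D) = 0 := (QuotientAddGroup.eq_zero_iff _).2 ⟨s, rfl⟩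
      rw [QuotientAddGroup.mk_add, h0, add_zero]
      exact Quotient.out_eq c
    constructor
    · rintro ⟨c, s⟩ ⟨c', s'⟩ h
      have h1 : c = c' := by
        rw [← hmk c s, ← hmk c' s']; exact congrArg _ h
      subst h1
      have h2 : s = s' := hf (add_left_cancel h)
      rw [h2]
    · intro v
      have h1 : ((Quotient.out (v : V ⧸ D) : V) : V ⧸ D) = (v : V ⧸ D) := Quotient.out_eq _
      obtain ⟨s, hs⟩ := (QuotientAddGroup.eq (s := D)).1 h1
      refine ⟨(v, s), ?_⟩
      simp only [hs]; abel
  let e : (V ⧸ D) × H ≃ V := Equiv.ofBijective _ hbij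
  -- ((c, s), s') ↦ (c + 2 s, s - s')
  let E : (V ⧸ D) × (H × H) ≃ V × H :=
    { toFun := fun q => (e (q.1, q.2.1), q.2.1 - q.2.2)
      invFun := fun p => ((e.symm p.1).1, ((e.symm p.1).2, (e.symm p.1).2 - p.2))
      left_inv := by rintro ⟨c, s, s'⟩; simp
      right_inv := by rintro ⟨u, h⟩; simp }
  have he : ∀ c s, e (c, s) = Quotient.out c + (ι s + ι s) := by
    intro c s; rfl
  rw [← E.tsum_eq]
  have hs2 := (E.summable_iff (f := fun p : V × H => a p.1 * a (p.1 - (ι p.2 + ι p.2)) * F p.2)).2 hsum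
  have hs3 : Summable fun q => a (E q).1 * a ((E q).1 - (ι (E q).2 + ι (E q).2)) * F (E q).2 := hs2
  rw [hs3.tsum_prod]
  refine tsum_nonneg fun c => ?_
  refine tsum_square_nonneg _ fun T => ?_
  rw [Finset.sum_product]
  refine (hF.finset (fun s => a (Quotient.out c + (ι s + ι s))) T).trans_eq ?_
  refine Finset.sum_congr rfl fun s _ => Finset.sum_congr rfl fun s' _ => ?_
  simp only [E, Equiv.coe_fn_mk, he]
  congr 3
  simp only [map_sub]; abel

/-- The Ginibre inequality. -/
theorem ginibre {V H : Type*} [AddCommGroup V] [AddCommGroup H] (ι : H →+ V)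
    (hι : Function.Injective fun h => ι h + ι h)
    (Q : V → ℝ) (hQ : ∀ φ ψ, Q (φ + ψ) + Q (φ - ψ) = 2 * Q φ + 2 * Q ψ)
    (x : V →+ ℝ)
    (hs0 : Summable fun v => Real.exp (-Q v))
    (hs1 : Summable fun v => |x v| * Real.exp (-(Q v / 2)))
    (hs2 : Summable fun v => x v ^ 2 * Real.exp (-Q v))
    (F : H → ℝ) (hF : PDF F) (hb : ∀ h, |F h| ≤ 1) :
    (∑' v, Real.exp (-Q v)) * (∑' h, x (ι h) ^ 2 * (F h * Real.exp (-Q (ι h)))) ≤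
      (∑' v, x v ^ 2 * Real.exp (-Q v)) * (∑' h, F h * Real.exp (-Q (ι h))) := by
  have hι' : Function.Injective ι := by
    intro a b h
    apply hι
    simp [h]
  have hF0 : Summable fun h => F h * Real.exp (-Q (ι h)) := by
    refine Summable.of_norm_bounded (hs0.comp_injective hι') fun h => ?_
    simp only [Real.norm_eq_abs, abs_mul, Function.comp, Real.abs_exp]
    exact mul_le_of_le_one_left (by positivity) (hb _)
  have hF2 : Summable fun h => x (ι h) ^ 2 * (F h * Real.exp (-Q (ι h))) := by
    refine Summable.of_norm_bounded (hs2.comp_injective hι') fun h => ?_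
    simp only [Real.norm_eq_abs, abs_mul, Function.comp, Real.abs_exp, abs_pow, sq_abs]
    gcongr
    exact mul_le_of_le_one_left (by positivity) (hb _)
  rw [tsum_mul_tsum_of_summable_norm hs0.norm hF2.norm,
    tsum_mul_tsum_of_summable_norm hs2.norm hF0.norm, ← sub_nonneg,
    ← (summable_mul_of_summable_norm hs2.norm hF0.norm).tsum_sub
      (summable_mul_of_summable_norm hs0.norm hF2.norm)]
  have key := ginibre_pos ι hι (fun v => x v * Real.exp (-(Q v / 2)))
    (by simpa [abs_mul] using hs1) F hF hb
  let E : V × H ≃ V × H :=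
    { toFun := fun p => (p.1 + ι p.2, p.2)
      invFun := fun p => (p.1 - ι p.2, p.2)
      left_inv := by rintro ⟨c, s⟩; simp
      right_inv := by rintro ⟨c, s⟩; simp }
  rw [← E.tsum_eq] at key
  refine key.trans_eq (tsum_congr ?_)
  rintro ⟨v, h⟩
  have e1 : v + ι h - (ι h + ι h) = v - ι h := by abel
  simp only [E, Equiv.coe_fn_mk, e1, map_add, map_sub]
  have e2 : Real.exp (-(Q (v + ι h) / 2)) * Real.exp (-(Q (v - ι h) / 2)) =
      Real.exp (-Q v) * Real.exp (-Q (ι h)) := by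
    rw [← Real.exp_add, ← Real.exp_add]; congr 1
    linarith [hQ v (ι h)]
  linear_combination (x v + x (ι h)) * (x v - x (ι h)) * F h * e2

/-! ### Part B: the quadratic form -/

theorem summ_inv_sq : Summable fun d : ℤ => 1 / ((d : ℤ) : ℝ) ^ 2 := by
  have := (Real.summable_one_div_int_pow (p := 2)).2 (by norm_num)
  exact this

theorem summ_left (g : ℤ →₀ ℝ) :
    Summable fun p : ℤ × ℤ => (g p.1) ^ 2 / ((p.1 - p.2 : ℤ) : ℝ) ^ 2 := by
  have h1 : Summable fun i : ℤ => (g i) ^ 2 := by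
    refine summable_of_ne_finset_zero (s := g.support) fun i hi => ?_
    simp at hi; simp [hi]
  have h2 := h1.mul_of_nonneg summ_inv_sq (fun _ => sq_nonneg _) (fun _ => by positivity)
  let E : ℤ × ℤ ≃ ℤ × ℤ :=
    { toFun := fun p => (p.1, p.1 - p.2)
      invFun := fun p => (p.1, p.1 - p.2)
      left_inv := by rintro ⟨a, b⟩; simp
      right_inv := by rintro ⟨a, b⟩; simp }
  refine ((E.summable_iff).2 h2).congr fun p => ?_
  simp [E, div_eq_mul_inv]

theorem summ_right (g : ℤ →₀ ℝ) :
    Summable fun p : ℤ × ℤ => (g p.2) ^ 2 / ((p.1 - p.2 : ℤ) : ℝ) ^ 2 := by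
  refine (((Equiv.prodComm ℤ ℤ).summable_iff).2 (summ_left g)).congr fun p => ?_
  simp only [Function.comp, Equiv.prodComm_apply, Prod.fst_swap, Prod.snd_swap]
  congr 1
  push_cast; ring

theorem summ_sq (g : ℤ →₀ ℝ) :
    Summable fun p : ℤ × ℤ => (g p.1 - g p.2) ^ 2 / ((p.1 - p.2 : ℤ) : ℝ) ^ 2 := by
  refine Summable.of_nonneg_of_le (fun p => by positivity) (fun p => ?_)
    (((summ_left g).mul_left 2).add ((summ_right g).mul_left 2))
  rw [← mul_div_assoc, ← mul_div_assoc, ← add_div]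
  gcongr
  nlinarith [sq_nonneg (g p.1 + g p.2)]

theorem summ_mul (g h : ℤ →₀ ℝ) :
    Summable fun p : ℤ × ℤ => (g p.1 - g p.2) * (h p.1 - h p.2) / ((p.1 - p.2 : ℤ) : ℝ) ^ 2 := by
  refine Summable.of_norm_bounded ((summ_sq g).add (summ_sq h)) fun p => ?_
  rw [← add_div, Real.norm_eq_abs, abs_div, abs_of_nonneg (sq_nonneg ((p.1 - p.2 : ℤ) : ℝ))]
  gcongr
  rw [abs_le]
  constructor <;> nlinarith [sq_nonneg ((g p.1 - g p.2) + (h p.1 - h p.2)), sq_nonneg ((g p.1 - g p.2) - (h p.1 - h p.2)), sq_nonneg (g p.1 - g p.2), sq_nonneg (h p.1 - h p.2)]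

/-- the bilinear form -/
noncomputable def BB : (ℤ →₀ ℝ) →ₗ[ℝ] (ℤ →₀ ℝ) →ₗ[ℝ] ℝ :=
  LinearMap.mk₂ ℝ (fun g h => ∑' p : ℤ × ℤ, (g p.1 - g p.2) * (h p.1 - h p.2) / ((p.1 - p.2 : ℤ) : ℝ) ^ 2)
    (by
      intro a b c
      rw [← (summ_mul a c).tsum_add (summ_mul b c)]
      refine tsum_congr fun p => ?_
      simp only [Finsupp.add_apply]; ring)
    (by
      intro t a c
      rw [smul_eq_mul, ← tsum_mul_left]
      refine tsum_congr fun p => ?_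
      simp only [Finsupp.smul_apply, smul_eq_mul]; ring)
    (by
      intro a b c
      rw [← (summ_mul a b).tsum_add (summ_mul a c)]
      refine tsum_congr fun p => ?_
      simp only [Finsupp.add_apply]; ring)
    (by
      intro t a c
      rw [smul_eq_mul, ← tsum_mul_left]
      refine tsum_congr fun p => ?_
      simp only [Finsupp.smul_apply, smul_eq_mul]; ring)

/-- the quadratic form -/
noncomputable def QB : QuadraticForm ℝ (ℤ →₀ ℝ) := LinearMap.BilinMap.toQuadraticMap BB

theorem QB_apply (g : ℤ →₀ ℝ) :
    QB g = ∑' p : ℤ × ℤ, (g p.1 - g p.2) ^ 2 / ((p.1 - p.2 : ℤ) : ℝ) ^ 2 := by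
  simp [QB, BB, sq]

theorem QB_ge_sum (g : ℤ →₀ ℝ) {ι : Type*} (s : Finset ι) (f : ι → ℤ × ℤ) (hf : Set.InjOn f s) :
    ∑ a ∈ s, (g (f a).1 - g (f a).2) ^ 2 / (((f a).1 - (f a).2 : ℤ) : ℝ) ^ 2 ≤ QB g := by
  classical
  rw [QB_apply]
  have := (summ_sq g).sum_le_tsum (s.image f) (fun _ _ => by positivity)
  rwa [Finset.sum_image hf] at this

/-- the sites -/
abbrev SS (N : ℕ) : Type := {i : ℤ // i ∈ Finset.Icc (-N : ℤ) N}

/-- extension by zero -/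
noncomputable def extL (N : ℕ) : (SS N → ℝ) →ₗ[ℝ] (ℤ →₀ ℝ) where
  toFun f := ∑ i : SS N, Finsupp.single (i : ℤ) (f i)
  map_add' f g := by
    simp only [Pi.add_apply, Finsupp.single_add, Finset.sum_add_distrib]
  map_smul' t f := by
    simp only [Pi.smul_apply, Finset.smul_sum, Finsupp.smul_single, RingHom.id_apply]

theorem extL_mem {N : ℕ} (f : SS N → ℝ) (i : SS N) :
    extL N f i = f i := by
  classical
  simp only [extL, LinearMap.coe_mk, AddHom.coe_mk, Finsupp.finsetSum_apply, Finsupp.single_apply]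
  rw [Finset.sum_eq_single i]
  · simp
  · intro b _ hb; rw [if_neg]; exact fun h => hb (Subtype.ext h)
  · simp

theorem extL_not {N : ℕ} (f : SS N → ℝ) (i : ℤ) (hi : i ∉ Finset.Icc (-N : ℤ) N) :
    extL N f i = 0 := by
  classical
  simp only [extL, LinearMap.coe_mk, AddHom.coe_mk, Finsupp.finsetSum_apply, Finsupp.single_apply]
  refine Finset.sum_eq_zero fun b _ => ?_
  rw [if_neg]
  rintro rfl
  exact hi b.2

theorem coer (N : ℕ) (f : SS N → ℝ) :
    (1 / (2 * N + 1) ^ 2 : ℝ) * ∑ i, f i ^ 2 ≤ QB (extL N f) := by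
  have h := QB_ge_sum (extL N f) (Finset.univ : Finset (SS N))
    (fun i => ((i : ℤ), (N + 1 : ℤ))) (by intro a _ b _ h; exact Subtype.ext (congrArg Prod.fst h))
  refine le_trans ?_ h
  rw [Finset.mul_sum]
  refine Finset.sum_le_sum fun i _ => ?_
  have hi := Finset.mem_Icc.1 i.2
  rw [extL_mem, extL_not _ (N + 1 : ℤ) (by simp), sub_zero, one_div, inv_mul_eq_div]
  apply div_le_div_of_nonneg_left (sq_nonneg _)
  · have : ((i : ℤ) - (N + 1 : ℤ)) ≠ 0 := by omega
    positivity
  · rw [sq_le_sq]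
    have h1 : |(((i : ℤ) - (N + 1 : ℤ) : ℤ) : ℝ)| = (((N + 1 : ℤ) - i : ℤ) : ℝ) := by
      rw [abs_of_nonpos]
      · push_cast; ring
      · have : ((i : ℤ) - (N + 1 : ℤ)) ≤ 0 := by omega
        exact_mod_cast this
    rw [h1, abs_of_nonneg (by positivity)]
    have : ((N + 1 : ℤ) - i) ≤ 2 * N + 1 := by omega
    exact_mod_cast this

/-! ### Part C: summability -/

theorem summ_gauss1 {κ : ℝ} (hκ : 0 < κ) (k : ℕ) :
    Summable fun n : ℤ => |(n : ℝ)| ^ k * Real.exp (-(κ * (n : ℝ) ^ 2)) := by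
  have := summable_pow_mul_jacobiTheta₂_term_bound 0 (T := κ / Real.pi) (by positivity) k
  refine this.congr fun n => ?_
  simp only [Int.cast_abs]
  congr 2
  field_simp
  ring

theorem summ_prod {T : Type*} [Fintype T] (w : ℤ → ℝ) (hw : ∀ n, 0 ≤ w n) (hs : Summable w) :
    Summable fun φ : T → ℤ => ∏ i, w (φ i) := by
  classical
  refine summable_of_sum_le (c := ∏ _i : T, ∑' n, w n) (fun φ => Finset.prod_nonneg fun i _ => hw _) fun U => ?_
  have h1 : U ⊆ Fintype.piFinset fun i => U.image fun φ => φ i := by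
    intro φ hφ
    rw [Fintype.mem_piFinset]
    intro i
    exact Finset.mem_image_of_mem (fun φ : T → ℤ => φ i) hφ
  refine (Finset.sum_le_sum_of_subset_of_nonneg h1 fun φ _ _ => Finset.prod_nonneg fun i _ => hw _).trans ?_
  rw [← Finset.prod_univ_sum (fun i => U.image fun φ => φ i) (fun _ n => w n)]
  refine Finset.prod_le_prod (fun i _ => Finset.sum_nonneg fun n _ => hw n) fun i _ => ?_
  exact hs.sum_le_tsum _ fun n _ => hw n

theorem summ_all {T : Type*} [Fintype T] {κ : ℝ} (hκ : 0 < κ) (Q : (T → ℤ) → ℝ)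
    (hQ : ∀ φ, κ * ∑ i, ((φ i : ℤ) : ℝ) ^ 2 ≤ Q φ) (P : (T → ℤ) → ℝ) (i0 : T)
    (hP : ∀ φ, |P φ| ≤ 1 + ((φ i0 : ℤ) : ℝ) ^ 2) :
    Summable fun φ => P φ * Real.exp (-Q φ) := by
  classical
  have h1 : Summable fun n : ℤ => (1 + (n : ℝ) ^ 2) * Real.exp (-(κ * (n : ℝ) ^ 2)) := by
    refine ((summ_gauss1 hκ 0).add (summ_gauss1 hκ 2)).congr fun n => ?_
    rw [sq_abs]; ring
  refine Summable.of_norm_bounded (summ_prod (T := T) _ (fun n => by positivity) h1) fun φ => ?_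
  rw [Finset.prod_mul_distrib, ← Real.exp_sum, norm_mul, Real.norm_eq_abs, Real.norm_eq_abs, Real.abs_exp]
  refine mul_le_mul ((hP φ).trans ?_) ?_ (by positivity) (Finset.prod_nonneg fun i _ => by positivity)
  · rw [← Finset.mul_prod_erase _ _ (Finset.mem_univ i0)]
    refine le_mul_of_one_le_right (by positivity) ?_
    exact Finset.one_le_prod fun i _ => by nlinarith [sq_nonneg ((φ i : ℤ) : ℝ)]
  · rw [Real.exp_le_exp, Finset.sum_neg_distrib, ← Finset.mul_sum]
    linarith [hQ φ]

/-- S(λ/4) ≤ 3 S(λ) -/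
theorem gauss_quarter {l : ℝ} (hl : 0 < l) :
    ∑' n : ℤ, Real.exp (-(l / 4 * (n : ℝ) ^ 2)) ≤ 3 * ∑' n : ℤ, Real.exp (-(l * (n : ℝ) ^ 2)) := by
  have hs : ∀ {k : ℝ}, 0 < k → Summable fun n : ℤ => Real.exp (-(k * (n : ℝ) ^ 2)) := fun hk => by
    simpa using summ_gauss1 hk 0
  have h1 := hs (k := l / 4) (by positivity)
  have h2 := hs hl
  let f : ℤ → ℝ := fun n => Real.exp (-(l / 4 * (n : ℝ) ^ 2))
  have he : ∀ n : ℤ, f (2 * n) = Real.exp (-(l * (n : ℝ) ^ 2)) := by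
    intro n; simp only [f]; congr 1; push_cast; ring
  have ho : ∀ n : ℤ, f (2 * n + 1) ≤ Real.exp (-(l * (n : ℝ) ^ 2)) +
      Real.exp (-(l * ((n + 1 : ℤ) : ℝ) ^ 2)) := by
    intro n
    simp only [f]
    rcases le_or_gt 0 n with h | h
    · have h' : (0 : ℝ) ≤ n := by exact_mod_cast h
      refine le_trans ?_ (le_add_of_nonneg_right (Real.exp_pos _).le)
      rw [Real.exp_le_exp]; push_cast
      nlinarith [mul_nonneg hl.le h']
    · have h' : (n : ℝ) + 1 ≤ 0 := by exact_mod_cast h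
      refine le_trans ?_ (le_add_of_nonneg_left (Real.exp_pos _).le)
      rw [Real.exp_le_exp]; push_cast
      nlinarith [mul_nonneg hl.le (neg_nonneg.2 h')]
  have hie : Function.Injective fun n : ℤ => 2 * n := fun a b h => by simpa using h
  have hio : Function.Injective fun n : ℤ => 2 * n + 1 := fun a b h => by simpa using h
  have hse : HasSum (fun n : ℤ => f (2 * n)) (∑' n : ℤ, f (2 * n)) := (h1.comp_injective hie).hasSum
  have hso : HasSum (fun n : ℤ => f (2 * n + 1)) (∑' n : ℤ, f (2 * n + 1)) := (h1.comp_injective hio).hasSum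
  have hcompl : IsCompl (Set.range fun n : ℤ => 2 * n) (Set.range fun n : ℤ => 2 * n + 1) := by
    constructor
    · rw [Set.disjoint_left]
      rintro _ ⟨a, rfl⟩ ⟨b, hb⟩
      simp only at hb
      omega
    · rw [codisjoint_iff_le_sup]
      intro n _
      rcases Int.even_or_odd' n with ⟨m, rfl | rfl⟩
      · exact Or.inl ⟨m, rfl⟩
      · exact Or.inr ⟨m, rfl⟩
  have h3 : ∑' n : ℤ, f n = ∑' n : ℤ, f (2 * n) + ∑' n : ℤ, f (2 * n + 1) :=
    (HasSum.add_isCompl (f := f) hcompl ((hie.hasSum_range_iff (f := f)).2 hse) ((hio.hasSum_range_iff (f := f)).2 hso)).tsum_eq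
  have h2' : Summable fun n : ℤ => Real.exp (-(l * ((n + 1 : ℤ) : ℝ) ^ 2)) :=
    (Equiv.addRight (1 : ℤ)).summable_iff.2 h2
  have h4 : ∑' n : ℤ, f (2 * n + 1) ≤ ∑' n : ℤ, Real.exp (-(l * (n : ℝ) ^ 2)) +
      ∑' n : ℤ, Real.exp (-(l * ((n + 1 : ℤ) : ℝ) ^ 2)) := by
    rw [← h2.tsum_add h2']
    exact hso.summable.tsum_le_tsum ho (h2.add h2')
  have h5 : ∑' n : ℤ, Real.exp (-(l * ((n + 1 : ℤ) : ℝ) ^ 2)) = ∑' n : ℤ, Real.exp (-(l * (n : ℝ) ^ 2)) :=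
    (Equiv.addRight (1 : ℤ)).tsum_eq fun n : ℤ => Real.exp (-(l * (n : ℝ) ^ 2))
  have h6 : ∑' n : ℤ, f (2 * n) = ∑' n : ℤ, Real.exp (-(l * (n : ℝ) ^ 2)) := tsum_congr he
  change ∑' n : ℤ, f n ≤ _
  linarith

theorem gauss_second {l : ℝ} (hl : 0 < l) :
    ∑' n : ℤ, (n : ℝ) ^ 2 * Real.exp (-(l * (n : ℝ) ^ 2)) ≤
      4 / l * ∑' n : ℤ, Real.exp (-(l * (n : ℝ) ^ 2)) := by
  have h1 : Summable fun n : ℤ => Real.exp (-(l / 4 * (n : ℝ) ^ 2)) := by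
    simpa using summ_gauss1 (κ := l / 4) (by positivity) 0
  have h2 : Summable fun n : ℤ => (n : ℝ) ^ 2 * Real.exp (-(l * (n : ℝ) ^ 2)) := by
    simpa using summ_gauss1 hl 2
  have h3 : ∑' n : ℤ, (n : ℝ) ^ 2 * Real.exp (-(l * (n : ℝ) ^ 2)) ≤
      ∑' n : ℤ, 4 / (3 * l) * Real.exp (-(l / 4 * (n : ℝ) ^ 2)) := by
    refine h2.tsum_le_tsum (fun n => ?_) (h1.mul_left _)
    have e : Real.exp (-(l * (n : ℝ) ^ 2)) =
        Real.exp (-(3 * l / 4 * (n : ℝ) ^ 2)) * Real.exp (-(l / 4 * (n : ℝ) ^ 2)) := by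
      rw [← Real.exp_add]; congr 1; ring
    rw [e, ← mul_assoc]
    gcongr
    have h5 := Real.add_one_le_exp (3 * l / 4 * (n : ℝ) ^ 2)
    rw [Real.exp_neg, ← div_eq_mul_inv, div_le_iff₀ (Real.exp_pos _), div_mul_eq_mul_div, le_div_iff₀ (by positivity)]
    linarith
  rw [tsum_mul_left] at h3
  refine h3.trans ?_
  have := gauss_quarter hl
  calc _ ≤ 4 / (3 * l) * (3 * ∑' n : ℤ, Real.exp (-(l * (n : ℝ) ^ 2))) := by gcongr
    _ = _ := by field_simp

/-! ### Part D: reduction to finite products -/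

/-- the origin -/
def i0 (N : ℕ) : SS N := ⟨0, by simp⟩

/-- cast -/
def castV (T : Type*) : (T → ℤ) →+ (T → ℝ) where
  toFun φ i := (φ i : ℝ)
  map_zero' := by ext; simp
  map_add' a b := by ext; simp

theorem castV_apply {T : Type*} (φ : T → ℤ) (i : T) : castV T φ i = (φ i : ℝ) := rfl

/-- the form on configurations -/
noncomputable def QN (β : ℝ) (N : ℕ) (φ : SS N → ℤ) : ℝ := β * QB (extL N (castV _ φ))

/-- the equivalence -/
noncomputable def cfgEquiv (N : ℕ) : ChainConfig N ≃ (SS N → ℤ) where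
  toFun φ i := φ.1 i
  invFun f := ⟨fun k => if h : k ∈ Finset.Icc (-N : ℤ) N then f ⟨k, h⟩ else 0, by
    intro k hk
    dsimp only
    rw [dif_neg]
    intro h
    rw [Finset.mem_Icc, ← abs_le] at h
    omega⟩
  left_inv φ := by
    apply Subtype.ext
    funext k
    dsimp only
    split_ifs with h
    · rfl
    · rw [Finset.mem_Icc, ← abs_le, not_le] at h
      exact (φ.2 k h).symm
  right_inv f := by
    funext i
    simp

theorem cfg_ext (N : ℕ) (φ : ChainConfig N) (k : ℤ) :
    extL N (castV _ (cfgEquiv N φ)) k = (φ.1 k : ℝ) := by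
  by_cases h : k ∈ Finset.Icc (-N : ℤ) N
  · exact extL_mem _ ⟨k, h⟩
  · rw [extL_not _ _ h]
    rw [Finset.mem_Icc, ← abs_le, not_le] at h
    rw [φ.2 k h]; simp

theorem weight_eq (N : ℕ) (β : ℝ) (φ : ChainConfig N) :
    chainWeight β 2 2 φ.1 = Real.exp (-QN β N (cfgEquiv N φ)) := by
  unfold chainWeight chainEnergy QN
  rw [QB_apply]
  congr 3
  refine tsum_congr fun p => ?_
  rw [cfg_ext, cfg_ext]
  split_ifs with h
  · simp [h]
  · rw [Real.rpow_two, Real.rpow_two, sq_abs, sq_abs]; push_cast; rfl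

theorem QN_neg (β : ℝ) (N : ℕ) (φ : SS N → ℤ) : QN β N (-φ) = QN β N φ := by
  unfold QN
  rw [map_neg, map_neg, QuadraticMap.map_neg]

theorem chainVar_eq (N : ℕ) (β : ℝ) :
    chainVar N β 2 2 = (∑' φ : SS N → ℤ, (φ (i0 N) : ℝ) ^ 2 * Real.exp (-QN β N φ)) /
      ∑' φ : SS N → ℤ, Real.exp (-QN β N φ) := by
  have hm : chainMean N β 2 2 = 0 := by
    unfold chainMean
    have h1 : ∑' φ : ChainConfig N, ((φ.val 0 : ℤ) : ℝ) * chainWeight β 2 2 φ.val =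
        ∑' φ : SS N → ℤ, (φ (i0 N) : ℝ) * Real.exp (-QN β N φ) := by
      rw [← (cfgEquiv N).tsum_eq]
      refine tsum_congr fun φ => ?_
      rw [weight_eq]; rfl
    have h2 : ∑' φ : SS N → ℤ, (φ (i0 N) : ℝ) * Real.exp (-QN β N φ) =
        -∑' φ : SS N → ℤ, (φ (i0 N) : ℝ) * Real.exp (-QN β N φ) := by
      conv_lhs => rw [← (Equiv.neg (SS N → ℤ)).tsum_eq]
      rw [← tsum_neg]
      refine tsum_congr fun φ => ?_
      simp [QN_neg]
    rw [h1, show ∑' φ : SS N → ℤ, (φ (i0 N) : ℝ) * Real.exp (-QN β N φ) = 0 by linarith, zero_div]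
  unfold chainVar chainZ
  rw [hm]
  have h1 : ∑' φ : ChainConfig N, ((φ.val 0 : ℤ) : ℝ) ^ 2 * chainWeight β 2 2 φ.val =
      ∑' φ : SS N → ℤ, (φ (i0 N) : ℝ) ^ 2 * Real.exp (-QN β N φ) := by
    rw [← (cfgEquiv N).tsum_eq]
    refine tsum_congr fun φ => ?_
    rw [weight_eq]; rfl
  have h2 : ∑' φ : ChainConfig N, chainWeight β 2 2 φ.val =
      ∑' φ : SS N → ℤ, Real.exp (-QN β N φ) := by
    rw [← (cfgEquiv N).tsum_eq]
    refine tsum_congr fun φ => ?_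
    rw [weight_eq]
  rw [h1, h2]; simp

theorem QN_coer {β : ℝ} (hβ : 0 < β) (N : ℕ) (φ : SS N → ℤ) :
    (β / (2 * N + 1) ^ 2) * ∑ i, ((φ i : ℤ) : ℝ) ^ 2 ≤ QN β N φ := by
  have := mul_le_mul_of_nonneg_left (coer N (castV _ φ)) hβ.le
  unfold QN
  refine le_trans (le_of_eq ?_) this
  simp only [castV_apply]
  ring

/-! ### Part E: upper bound -/

/-- dyadic averages -/
noncomputable def dyA (g : ℤ →₀ ℝ) (k : ℕ) : ℝ :=
  (∑ a ∈ Finset.range (2 ^ k), g (2 ^ k - 1 + a)) / 2 ^ k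

theorem dyA_step (g : ℤ →₀ ℝ) (k : ℕ) :
    (dyA g k - dyA g (k + 1)) ^ 2 ≤ 9 / 2 * ∑ p ∈ Finset.range (2 ^ k) ×ˢ Finset.range (2 ^ (k + 1)),
      (g (2 ^ k - 1 + p.1) - g (2 ^ (k + 1) - 1 + p.2)) ^ 2 /
        (((2 ^ k - 1 + p.1) - (2 ^ (k + 1) - 1 + p.2) : ℤ) : ℝ) ^ 2 := by
  have h1 : dyA g k - dyA g (k + 1) =
      (∑ p ∈ Finset.range (2 ^ k) ×ˢ Finset.range (2 ^ (k + 1)),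
      (g (2 ^ k - 1 + p.1) - g (2 ^ (k + 1) - 1 + p.2))) / (2 ^ k * 2 ^ (k + 1)) := by
    rw [Finset.sum_sub_distrib, Finset.sum_product, Finset.sum_product]
    simp only [Finset.sum_const, Finset.card_range, nsmul_eq_mul, ← Finset.mul_sum]
    unfold dyA
    push_cast
    field_simp
  rw [h1, div_pow, div_le_iff₀ (by positivity)]
  refine (sq_sum_le_card_mul_sum_sq).trans ?_
  rw [Finset.card_product, Finset.card_range, Finset.card_range]
  have h2 : ∀ p ∈ Finset.range (2 ^ k) ×ˢ Finset.range (2 ^ (k + 1)),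
      (g (2 ^ k - 1 + p.1) - g (2 ^ (k + 1) - 1 + p.2)) ^ 2 ≤ (9 * 4 ^ k) *
      ((g (2 ^ k - 1 + p.1) - g (2 ^ (k + 1) - 1 + p.2)) ^ 2 /
        (((2 ^ k - 1 + p.1) - (2 ^ (k + 1) - 1 + p.2) : ℤ) : ℝ) ^ 2) := by
    rintro ⟨a, b⟩ hp
    simp only [Finset.mem_product, Finset.mem_range] at hp
    dsimp only
    obtain ⟨ha, hb⟩ := hp
    have ha' : (a : ℤ) < 2 ^ k := by exact_mod_cast ha
    have hb' : (b : ℤ) < 2 ^ (k + 1) := by exact_mod_cast hb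
    set D : ℤ := ((2 ^ k - 1 + a) - (2 ^ (k + 1) - 1 + b) : ℤ) with hD
    have h2k : (2 : ℤ) ^ (k + 1) = 2 * 2 ^ k := by ring
    have h3 : D < 0 := by omega
    have h4 : -(3 * 2 ^ k) ≤ D := by omega
    have h5 : (D : ℝ) < 0 := by exact_mod_cast h3
    have h6 : -(3 * 2 ^ k) ≤ (D : ℝ) := by exact_mod_cast h4
    have h7 : (D : ℝ) ^ 2 ≤ 9 * 4 ^ k := by
      have : (4 : ℝ) ^ k = (2 ^ k) ^ 2 := by rw [← pow_mul, mul_comm, pow_mul]; norm_num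
      rw [this]
      nlinarith
    rw [← mul_div_assoc, le_div_iff₀ (by nlinarith), mul_comm]
    gcongr
  have h3 := Finset.sum_le_sum h2
  rw [← Finset.mul_sum] at h3
  have h4 : (4 : ℝ) ^ k = (2 ^ k) ^ 2 := by rw [← pow_mul, mul_comm, pow_mul]; norm_num
  refine (mul_le_mul_of_nonneg_left h3 (by positivity)).trans (le_of_eq ?_)
  rw [h4]
  push_cast
  ring

theorem QB_log (g : ℤ →₀ ℝ) (K : ℕ) (hg : ∀ i : ℤ, 2 ^ K - 1 ≤ i → g i = 0) :
    g 0 ^ 2 ≤ 9 / 2 * K * QB g := by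
  have h0 : dyA g 0 = g 0 := by simp [dyA]
  have hK : dyA g K = 0 := by
    unfold dyA
    rw [Finset.sum_eq_zero, zero_div]
    intro a _
    exact hg _ (by omega)
  have h1 : g 0 = ∑ k ∈ Finset.range K, (dyA g k - dyA g (k + 1)) := by
    rw [Finset.sum_range_sub', h0, hK, sub_zero]
  have h2 : g 0 ^ 2 ≤ K * ∑ k ∈ Finset.range K, (dyA g k - dyA g (k + 1)) ^ 2 := by
    rw [h1]
    refine (sq_sum_le_card_mul_sum_sq).trans ?_
    rw [Finset.card_range]
  have h3 : ∑ k ∈ Finset.range K, (dyA g k - dyA g (k + 1)) ^ 2 ≤ 9 / 2 * QB g := by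
    refine (Finset.sum_le_sum fun k _ => dyA_step g k).trans ?_
    rw [← Finset.mul_sum]
    gcongr
    rw [Finset.sum_sigma']
    have := QB_ge_sum g ((Finset.range K).sigma fun k => Finset.range (2 ^ k) ×ˢ Finset.range (2 ^ (k + 1)))
      (fun q => ((2 ^ q.1 - 1 + q.2.1 : ℤ), (2 ^ (q.1 + 1) - 1 + q.2.2 : ℤ))) (by
        rintro ⟨k, a, b⟩ h ⟨k', a', b'⟩ h' e
        simp only [Finset.coe_sigma, Finset.coe_product, Set.mem_sigma_iff, Set.mem_prod, Finset.mem_coe, Finset.mem_range] at h h'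
        simp only [Prod.mk.injEq] at e
        have e1 : 2 ^ k + a = 2 ^ k' + a' := by
          have : (2 : ℤ) ^ k + a = 2 ^ k' + a' := by linarith [e.1]
          exact_mod_cast this
        have l1 : Nat.log 2 (2 ^ k + a) = k :=
          Nat.log_eq_of_pow_le_of_lt_pow (by omega) (by rw [pow_succ]; omega)
        have l2 : Nat.log 2 (2 ^ k' + a') = k' :=
          Nat.log_eq_of_pow_le_of_lt_pow (by omega) (by rw [pow_succ]; omega)
        have hk : k = k' := by rw [← l1, e1, l2]
        subst hk
        have e2 : a = a' := by omega
        have e3 : b = b' := by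
          have := e.2
          have : (b : ℤ) = b' := by linarith
          exact_mod_cast this
        rw [e2, e3])
    exact this
  calc g 0 ^ 2 ≤ _ := h2
    _ ≤ K * (9 / 2 * QB g) := by gcongr
    _ = _ := by ring

theorem QN_log {β : ℝ} (hβ : 0 < β) (N K : ℕ) (hK : N + 2 ≤ 2 ^ K) (hK0 : 0 < K) (f : SS N → ℝ) :
    (2 * β / (9 * K)) * f (i0 N) ^ 2 ≤ β * QB (extL N f) := by
  have h := QB_log (extL N f) K (by
    intro i hi
    apply extL_not
    have : ((N + 2 : ℕ) : ℤ) ≤ 2 ^ K := by exact_mod_cast hK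
    rw [Finset.mem_Icc]
    push_cast at this
    omega)
  have e : extL N f 0 = f (i0 N) := extL_mem f (i0 N)
  rw [e] at h
  have hK' : (0 : ℝ) < K := by exact_mod_cast hK0
  rw [div_mul_eq_mul_div, div_le_iff₀ (by positivity)]
  nlinarith

theorem split_sum {T : Type*} [Fintype T] [DecidableEq T] (t : T) (l κ : ℝ) (hl : 0 < l) (hκ : 0 < κ) :
    ∑' φ : T → ℤ, (φ t : ℝ) ^ 2 * Real.exp (-(l * (φ t : ℝ) ^ 2 + κ * ∑ i, (φ i : ℝ) ^ 2)) ≤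
      4 / l * ∑' φ : T → ℤ, Real.exp (-(l * (φ t : ℝ) ^ 2 + κ * ∑ i, (φ i : ℝ) ^ 2)) := by
  let W : ({ j // j ≠ t } → ℤ) → ℝ := fun ψ => ∏ i, Real.exp (-(κ * (ψ i : ℝ) ^ 2))
  have hexp : ∀ φ : T → ℤ, Real.exp (-(l * (φ t : ℝ) ^ 2 + κ * ∑ i, (φ i : ℝ) ^ 2)) =
      Real.exp (-((l + κ) * (φ t : ℝ) ^ 2)) * W (Equiv.funSplitAt t ℤ φ).2 := by
    intro φ
    simp only [W]
    rw [← Real.exp_sum, ← Real.exp_add]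
    congr 1
    rw [← Finset.add_sum_erase _ _ (Finset.mem_univ t), Finset.sum_neg_distrib, ← Finset.mul_sum]
    have : ∑ x ∈ Finset.univ.erase t, (φ x : ℝ) ^ 2 =
      ∑ i : { j // j ≠ t }, (((Equiv.funSplitAt t ℤ φ).2 i : ℤ) : ℝ) ^ 2 := by
      exact Finset.sum_subtype (f := fun x => (φ x : ℝ) ^ 2) (Finset.univ.erase t) (p := fun j => j ≠ t) (by simp)
    rw [this]; ring
  have hlk : 0 < l + κ := by positivity
  have s0 : Summable fun n : ℤ => Real.exp (-((l + κ) * (n : ℝ) ^ 2)) := by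
    simpa using summ_gauss1 hlk 0
  have s2 : Summable fun n : ℤ => (n : ℝ) ^ 2 * Real.exp (-((l + κ) * (n : ℝ) ^ 2)) := by
    simpa using summ_gauss1 hlk 2
  have sW : Summable W := by
    refine summ_prod (fun n : ℤ => Real.exp (-(κ * (n : ℝ) ^ 2))) (fun n => (Real.exp_pos _).le) ?_
    simpa using summ_gauss1 hκ 0
  have hW : 0 ≤ ∑' ψ, W ψ := tsum_nonneg fun ψ => Finset.prod_nonneg fun i _ => (Real.exp_pos _).le
  have e0 : ∑' φ : T → ℤ, Real.exp (-(l * (φ t : ℝ) ^ 2 + κ * ∑ i, (φ i : ℝ) ^ 2)) =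
      (∑' n : ℤ, Real.exp (-((l + κ) * (n : ℝ) ^ 2))) * ∑' ψ, W ψ := by
    rw [tsum_mul_tsum_of_summable_norm s0.norm sW.norm, ← (Equiv.funSplitAt t ℤ).tsum_eq]
    refine tsum_congr fun φ => ?_
    rw [hexp]; rfl
  have e2 : ∑' φ : T → ℤ, (φ t : ℝ) ^ 2 * Real.exp (-(l * (φ t : ℝ) ^ 2 + κ * ∑ i, (φ i : ℝ) ^ 2)) =
      (∑' n : ℤ, (n : ℝ) ^ 2 * Real.exp (-((l + κ) * (n : ℝ) ^ 2))) * ∑' ψ, W ψ := by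
    rw [tsum_mul_tsum_of_summable_norm s2.norm sW.norm, ← (Equiv.funSplitAt t ℤ).tsum_eq]
    refine tsum_congr fun φ => ?_
    rw [hexp, ← mul_assoc]; rfl
  rw [e0, e2, ← mul_assoc]
  refine mul_le_mul_of_nonneg_right ((gauss_second hlk).trans ?_) hW
  refine mul_le_mul_of_nonneg_right ?_ (tsum_nonneg fun n => (Real.exp_pos _).le)
  apply div_le_div_of_nonneg_left (by norm_num) hl (by linarith)

theorem var_upper {β : ℝ} (hβ : 0 < β) (N K : ℕ) (hK : N + 2 ≤ 2 ^ K) (hK0 : 0 < K) :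
    chainVar N β 2 2 ≤ 36 * K / β := by
  have hK' : (0 : ℝ) < K := by exact_mod_cast hK0
  set l : ℝ := 2 * β / (9 * K) with hl
  set κ : ℝ := β / (2 * N + 1) ^ 2 with hκ
  have hl0 : 0 < l := by positivity
  have hκ0 : 0 < κ := by positivity
  let Q : (SS N → ℤ) → ℝ := fun φ => l / 2 * (φ (i0 N) : ℝ) ^ 2 + κ / 2 * ∑ i, (φ i : ℝ) ^ 2
  let R : QuadraticForm ℝ (SS N → ℝ) := β • QB.comp (extL N) -
    ((l / 2) • (QuadraticMap.sq (R := ℝ)).comp (LinearMap.proj (R := ℝ) (φ := fun _ : SS N => ℝ) (i0 N)) +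
     (κ / 2) • ∑ i, (QuadraticMap.sq (R := ℝ)).comp (LinearMap.proj (R := ℝ) (φ := fun _ : SS N => ℝ) i))
  have hRa : ∀ f : SS N → ℝ, R f = β * QB (extL N f) - (l / 2 * f (i0 N) ^ 2 + κ / 2 * ∑ i, f i ^ 2) := by
    intro f
    simp [R, sq]
  have hR : ∀ f, 0 ≤ R f := by
    intro f
    rw [hRa]
    have h1 := QN_log hβ N K hK hK0 f
    have h2 := mul_le_mul_of_nonneg_left (coer N f) hβ.le
    have h3 : β * (1 / (2 * N + 1) ^ 2 * ∑ i, f i ^ 2) = κ * ∑ i, f i ^ 2 := by rw [hκ]; ring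
    rw [h3] at h2
    linarith
  have hRc : ∀ φ : SS N → ℤ, R (castV _ φ) = QN β N φ - Q φ := by
    intro φ; rw [hRa]; rfl
  have hQQ : ∀ φ, Q φ ≤ QN β N φ := fun φ => by
    have := hR (castV _ φ); rw [hRc] at this; linarith
  have hQκ : ∀ φ, κ / 2 * ∑ i, ((φ i : ℤ) : ℝ) ^ 2 ≤ Q φ := fun φ => by
    simp only [Q]; have : 0 ≤ l / 2 * (φ (i0 N) : ℝ) ^ 2 := by positivity
    linarith
  let x : (SS N → ℤ) →+ ℝ := (Int.castAddHom ℝ).comp (Pi.evalAddMonoidHom (fun _ : SS N => ℤ) (i0 N))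
  have hx : ∀ φ, x φ = (φ (i0 N) : ℝ) := fun φ => rfl
  have habs : ∀ y : ℝ, |y| ≤ 1 + y ^ 2 := fun y => by
    rw [← sq_abs y]; nlinarith [sq_nonneg (|y| - 1), abs_nonneg y]
  have hs0 : Summable fun φ => Real.exp (-Q φ) := by
    have := summ_all (half_pos hκ0) Q hQκ (fun _ => 1) (i0 N) (fun φ => by simp; positivity)
    simpa using this
  have hs1 : Summable fun φ => |x φ| * Real.exp (-(Q φ / 2)) := by
    refine summ_all (half_pos (half_pos hκ0)) (fun φ => Q φ / 2) (fun φ => ?_) (fun φ => |x φ|) (i0 N) (fun φ => ?_)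
    · have := hQκ φ; linarith
    · rw [abs_abs, hx]; exact habs _
  have hs2 : Summable fun φ => x φ ^ 2 * Real.exp (-Q φ) := by
    refine summ_all (half_pos hκ0) Q hQκ (fun φ => x φ ^ 2) (i0 N) (fun φ => ?_)
    rw [abs_of_nonneg (sq_nonneg _), hx]; linarith
  have key := ginibre (AddMonoidHom.id (SS N → ℤ)) (by
      intro a b h
      funext i
      have := congrFun h i
      simp only [AddMonoidHom.id_apply, Pi.add_apply] at this
      omega) Q (by
      intro φ ψ
      simp only [Q, Finset.mul_sum, Pi.add_apply, Pi.sub_apply, mul_add]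
      have : ∀ a b c d e f g h : ℝ, a + c = e + g → b + d = f + h → a + b + (c + d) = e + f + (g + h) := by
        intros; linarith
      refine this _ _ _ _ _ _ _ _ ?_ ?_
      · push_cast; ring
      · rw [← Finset.sum_add_distrib, ← Finset.sum_add_distrib]
        refine Finset.sum_congr rfl fun i _ => ?_
        push_cast; ring) x hs0 hs1 hs2
    (fun φ => Real.exp (-R (castV _ φ))) (PDF.gauss R hR (castV _)) (by
      intro φ
      rw [Real.abs_exp, Real.exp_le_one_iff]
      linarith [hR (castV _ φ)])
  simp only [AddMonoidHom.id_apply] at key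
  have hF : ∀ φ, Real.exp (-R (castV _ φ)) * Real.exp (-Q φ) = Real.exp (-QN β N φ) := by
    intro φ; rw [← Real.exp_add, hRc]; congr 1; ring
  simp only [hF, hx] at key
  have hsp := split_sum (i0 N) (l / 2) (κ / 2) (by positivity) (by positivity)
  have hZ : 0 < ∑' φ, Real.exp (-Q φ) := hs0.tsum_pos (fun _ => (Real.exp_pos _).le) 0 (Real.exp_pos _)
  have hsQ : Summable fun φ => Real.exp (-QN β N φ) :=
    Summable.of_nonneg_of_le (fun _ => (Real.exp_pos _).le) (fun φ => by
      rw [Real.exp_le_exp]; linarith [hQQ φ]) hs0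
  have hZ' : 0 < ∑' φ, Real.exp (-QN β N φ) :=
    hsQ.tsum_pos (fun _ => (Real.exp_pos _).le) 0 (Real.exp_pos _)
  rw [chainVar_eq, div_le_iff₀ hZ']
  have h4 : 36 * K / β = 4 / (l / 2) := by rw [hl]; field_simp; norm_num
  rw [h4]
  have h5 : (∑' φ, Real.exp (-Q φ)) * (∑' φ : SS N → ℤ, (φ (i0 N) : ℝ) ^ 2 * Real.exp (-QN β N φ)) ≤
      (∑' φ, Real.exp (-Q φ)) * (4 / (l / 2) * ∑' φ, Real.exp (-QN β N φ)) := by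
    refine key.trans ((mul_le_mul_of_nonneg_right hsp hZ'.le).trans (le_of_eq ?_))
    ring
  exact le_of_mul_le_mul_left h5 hZ

theorem var_upper_log {β : ℝ} (hβ : 0 < β) (N : ℕ) (hN : 2 ≤ N) :
    chainVar N β 2 2 ≤ 180 / β * Real.log N := by
  have h1 := var_upper hβ N (Nat.log 2 N + 2) (by
    have := Nat.lt_pow_succ_log_self (b := 2) (by norm_num) N
    rw [pow_succ] at this ⊢
    omega) (by omega)
  refine h1.trans ?_
  have h2 : 1 ≤ Nat.log 2 N := Nat.log_pos (by norm_num) hN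
  have h2' : (1 : ℝ) ≤ Nat.log 2 N := by exact_mod_cast h2
  have h3 : (2 : ℝ) ^ Nat.log 2 N ≤ N := by exact_mod_cast Nat.pow_log_le_self 2 (by omega)
  have h4 := Real.log_le_log (by positivity) h3
  rw [Real.log_pow] at h4
  have h5 := Real.log_two_gt_d9
  have h6 : ((Nat.log 2 N + 2 : ℕ) : ℝ) ≤ 5 * Real.log N := by
    push_cast; nlinarith
  rw [div_mul_eq_mul_div]
  apply div_le_div_of_nonneg_right _ hβ.le
  linarith

/-! ### Part F: multiscale comparison of the energy -/

open scoped ENNReal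

/-- square as extended nonnegative real -/
noncomputable def sqE (x : ℝ) : ℝ≥0∞ := ENNReal.ofReal (x ^ 2)

/-- box sums -/
noncomputable def TT (k : ℕ) (g : ℤ → ℝ) : ℝ≥0∞ :=
  ∑' i : ℤ, ∑' j : ℤ, if |i - j| ≤ 3 ^ k then sqE (g i - g j) else 0

/-- multiscale kernel energy -/
noncomputable def QJ (g : ℤ → ℝ) : ℝ≥0∞ :=
  ∑' k : ℕ, ENNReal.ofReal ((1 + (1 / 2) ^ k) / 9 ^ k) * TT k g

/-- gradient energy -/
noncomputable def DD (g : ℤ → ℝ) : ℝ≥0∞ := ∑' i : ℤ, sqE (g (i + 1) - g i)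

/-- coarse graining -/
def coarse (g : ℤ → ℝ) (m : ℤ) : ℝ := g (3 * m + 1)

theorem sqE_zero : sqE 0 = 0 := by simp [sqE]

theorem sqE_neg (x y : ℝ) : sqE (x - y) = sqE (y - x) := by
  unfold sqE; congr 1; ring

theorem QB_le_QJ (g : ℤ →₀ ℝ) : ENNReal.ofReal (QB g) ≤ 9 * QJ g := by
  rw [QB_apply, ENNReal.ofReal_tsum_of_nonneg (fun p => by positivity) (summ_sq g)]
  unfold QJ TT
  have h1 : (∑' k : ℕ, ENNReal.ofReal ((1 + (1 / 2) ^ k) / 9 ^ k) *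
      ∑' i : ℤ, ∑' j : ℤ, if |i - j| ≤ 3 ^ k then sqE (g i - g j) else 0) =
      ∑' p : ℤ × ℤ, ∑' k : ℕ, ENNReal.ofReal ((1 + (1 / 2) ^ k) / 9 ^ k) *
        if |p.1 - p.2| ≤ 3 ^ k then sqE (g p.1 - g p.2) else 0 := by
    rw [ENNReal.tsum_comm]
    refine tsum_congr fun k => ?_
    rw [ENNReal.tsum_mul_left]
    congr 1
    rw [ENNReal.tsum_prod']
  rw [h1, ← ENNReal.tsum_mul_left]
  refine ENNReal.tsum_le_tsum fun p => ?_
  rcases eq_or_ne p.1 p.2 with h | h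
  · simp [h]
  set d : ℕ := (p.1 - p.2).natAbs with hd
  have hd0 : 0 < d := by omega
  set k0 := Nat.clog 3 d with hk0
  have hk1 : d ≤ 3 ^ k0 := Nat.le_pow_clog (by norm_num) d
  have hk2 : 3 ^ k0 ≤ 3 * d := by
    rcases Nat.lt_or_ge 1 d with h1 | h1
    · have := Nat.pow_pred_clog_lt_self (b := 3) (by norm_num) h1
      have h2 : 0 < k0 := Nat.clog_pos (by norm_num) h1
      obtain ⟨m, hm⟩ : ∃ m, k0 = m + 1 := ⟨k0 - 1, by omega⟩
      rw [← hk0, hm] at this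
      rw [hm, pow_succ]
      simp at this
      omega
    · have : d = 1 := by omega
      rw [hk0, this]; simp
  refine le_trans ?_ (mul_le_mul_right (ENNReal.le_tsum k0) 9)
  have habs : |p.1 - p.2| ≤ 3 ^ k0 := by
    rw [Int.abs_eq_natAbs]; exact_mod_cast hk1
  rw [if_pos habs]
  have hdR : ((p.1 - p.2 : ℤ) : ℝ) ^ 2 = (d : ℝ) ^ 2 := by
    rw [hd, ← sq_abs, ← Int.cast_abs, Int.abs_eq_natAbs]; simp
  have h9 : (9 : ℝ≥0∞) = ENNReal.ofReal 9 := by simp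
  rw [h9]
  unfold sqE
  rw [← ENNReal.ofReal_mul (by positivity), ← ENNReal.ofReal_mul (by positivity)]
  apply ENNReal.ofReal_le_ofReal
  rw [hdR]
  have hk2' : (3 : ℝ) ^ k0 ≤ 3 * d := by exact_mod_cast hk2
  have hd' : (0 : ℝ) < d := by exact_mod_cast hd0
  have h99 : (9 : ℝ) ^ k0 ≤ 9 * d ^ 2 := by
    have e : (9 : ℝ) ^ k0 = (3 ^ k0) ^ 2 := by rw [← pow_mul, mul_comm, pow_mul]; norm_num
    rw [e]
    have : (0 : ℝ) < 3 ^ k0 := by positivity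
    nlinarith
  have hc : 1 / (d : ℝ) ^ 2 ≤ 9 * ((1 + (1 / 2) ^ k0) / 9 ^ k0) := by
    rw [← mul_div_assoc, div_le_div_iff₀ (by positivity) (by positivity)]
    have : (0 : ℝ) ≤ (1 / 2) ^ k0 := by positivity
    nlinarith [mul_nonneg this (sq_nonneg (d : ℝ))]
  rw [div_eq_mul_one_div, ← mul_assoc, mul_comm (_ ^ 2)]
  exact mul_le_mul_of_nonneg_right hc (sq_nonneg _)

theorem tsum3 (f : ℤ → ℝ≥0∞) :
    ∑' i, f i = ∑' m : ℤ, (f (3 * m + 1) + f (3 * m + 2) + f (3 * m + 3)) := by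
  let e : ℤ × Fin 3 ≃ ℤ :=
    { toFun := fun p => 3 * p.1 + 1 + (p.2 : ℕ)
      invFun := fun i => ((i - 1) / 3, ⟨((i - 1) % 3).toNat, by omega⟩)
      left_inv := by
        rintro ⟨m, s⟩
        ext
        · simp only; omega
        · simp only; omega
      right_inv := by
        intro i
        simp only
        omega }
  rw [← e.tsum_eq, ENNReal.tsum_prod']
  refine tsum_congr fun m => ?_
  rw [tsum_fintype, Fin.sum_univ_three]
  simp only [e, Equiv.coe_fn_mk]
  congr 2
  all_goals simp [add_assoc]

theorem tsum3_div (f : ℤ → ℝ≥0∞) : ∑' i : ℤ, f ((i - 1) / 3) = 3 * ∑' m, f m := by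
  rw [tsum3, ← ENNReal.tsum_mul_left]
  refine tsum_congr fun m => ?_
  rw [show (3 * m + 1 - 1) / 3 = m by omega, show (3 * m + 2 - 1) / 3 = m by omega,
    show (3 * m + 3 - 1) / 3 = m by omega]
  ring

/-- distance to the coarse field -/
noncomputable def EE (g : ℤ → ℝ) : ℝ≥0∞ := ∑' i : ℤ, sqE (g i - coarse g ((i - 1) / 3))

theorem EE_le (g : ℤ → ℝ) : EE g ≤ 3 * DD g := by
  unfold EE DD
  rw [tsum3, tsum3 (fun i => sqE (g (i + 1) - g i)), ← ENNReal.tsum_mul_left]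
  refine ENNReal.tsum_le_tsum fun m => ?_
  rw [show (3 * m + 1 - 1) / 3 = m by omega, show (3 * m + 2 - 1) / 3 = m by omega,
    show (3 * m + 3 - 1) / 3 = m by omega, show 3 * m + 1 + 1 = 3 * m + 2 by ring,
    show 3 * m + 2 + 1 = 3 * m + 3 by ring]
  unfold coarse
  rw [sub_self, sqE_zero, zero_add]
  have h3 : (3 : ℝ≥0∞) = ENNReal.ofReal 3 := by simp
  unfold sqE
  rw [h3, ← ENNReal.ofReal_add (by positivity) (by positivity),
    ← ENNReal.ofReal_add (by positivity) (by positivity),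
    ← ENNReal.ofReal_add (by positivity) (by positivity), ← ENNReal.ofReal_mul (by positivity)]
  apply ENNReal.ofReal_le_ofReal
  nlinarith [sq_nonneg ((g (3 * m + 3) - g (3 * m + 2)) - (g (3 * m + 2) - g (3 * m + 1))),
    sq_nonneg (g (3 * m + 3) - g (3 * m + 2)), sq_nonneg (g (3 * m + 3 + 1) - g (3 * m + 3))]

theorem TT_zero (g : ℤ → ℝ) : TT 0 g ≤ 2 * DD g := by
  unfold TT DD
  have h1 : ∀ i : ℤ, (∑' j : ℤ, if |i - j| ≤ 3 ^ 0 then sqE (g i - g j) else 0) ≤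
      sqE (g (i + 1) - g i) + sqE (g i - g (i - 1)) := by
    intro i
    rw [tsum_eq_sum (s := {i - 1, i, i + 1})]
    · rw [Finset.sum_insert (by simp; omega), Finset.sum_insert (by simp), Finset.sum_singleton]
      simp only [sub_self, sqE_zero]
      rw [sqE_neg (g i) (g (i + 1))]
      simp [add_comm]
    · intro j hj
      simp only [Finset.mem_insert, Finset.mem_singleton, not_or] at hj
      rw [if_neg]
      rw [pow_zero, abs_le]
      omega
  refine (ENNReal.tsum_le_tsum h1).trans (le_of_eq ?_)
  rw [ENNReal.tsum_add, two_mul]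
  congr 1
  rw [← (Equiv.addRight (1 : ℤ)).tsum_eq (fun i => sqE (g i - g (i - 1)))]
  refine tsum_congr fun i => ?_
  simp

theorem box_sum (M : ℕ) (f : ℤ → ℝ≥0∞) :
    (∑' i : ℤ, ∑' j : ℤ, if |i - j| ≤ M then f i else 0) = (2 * M + 1 : ℕ) * ∑' i, f i := by
  rw [← ENNReal.tsum_mul_left]
  refine tsum_congr fun i => ?_
  rw [tsum_eq_sum (s := Finset.Icc (i - M) (i + M))]
  · rw [Finset.sum_congr rfl (g := fun _ => f i)]
    · rw [Finset.sum_const, Int.card_Icc, nsmul_eq_mul]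
      congr 2
      omega
    · intro j hj
      rw [Finset.mem_Icc] at hj
      rw [if_pos]
      rw [abs_le]; omega
  · intro j hj
    rw [Finset.mem_Icc] at hj
    rw [if_neg]
    rw [abs_le]; omega

theorem TT_step (k : ℕ) (g : ℤ → ℝ) :
    TT (k + 1) g ≤ ENNReal.ofReal (9 * (1 + (1 / 2) ^ (k + 2))) * TT k (coarse g) +
      ENNReal.ofReal (150 * 6 ^ k) * EE g := by
  set c1 : ℝ := 1 + (1 / 2) ^ (k + 2) with hc1
  set c2 : ℝ := 10 * 2 ^ k with hc2
  have hpt : ∀ i j : ℤ, (if |i - j| ≤ 3 ^ (k + 1) then sqE (g i - g j) else 0) ≤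
      ENNReal.ofReal c1 * (if |(i - 1) / 3 - (j - 1) / 3| ≤ 3 ^ k then
        sqE (coarse g ((i - 1) / 3) - coarse g ((j - 1) / 3)) else 0) +
      ENNReal.ofReal c2 * ((if |i - j| ≤ (3 ^ (k + 1) : ℕ) then sqE (g i - coarse g ((i - 1) / 3)) else 0) +
        (if |i - j| ≤ (3 ^ (k + 1) : ℕ) then sqE (g j - coarse g ((j - 1) / 3)) else 0)) := by
    intro i j
    by_cases h : |i - j| ≤ 3 ^ (k + 1)
    · have h2 : |(i - 1) / 3 - (j - 1) / 3| ≤ 3 ^ k := by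
        rw [abs_le] at h ⊢
        rw [pow_succ] at h
        omega
      have h3 : |i - j| ≤ (3 ^ (k + 1) : ℕ) := by exact_mod_cast h
      rw [if_pos h, if_pos h2, if_pos h3, if_pos h3]
      unfold sqE
      set a := g i - coarse g ((i - 1) / 3) with ha
      set b := coarse g ((i - 1) / 3) - coarse g ((j - 1) / 3) with hb
      set c := g j - coarse g ((j - 1) / 3) with hc
      have e : g i - g j = a + b - c := by rw [ha, hb, hc]; ring
      rw [e, ← ENNReal.ofReal_add (by positivity) (by positivity),
        ← ENNReal.ofReal_mul (by positivity), ← ENNReal.ofReal_mul (by positivity),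
        ← ENNReal.ofReal_add (by positivity) (by positivity)]
      apply ENNReal.ofReal_le_ofReal
      have hε : ((1 : ℝ) / 2) ^ (k + 2) * 2 ^ k = 1 / 4 := by
        rw [pow_add, mul_right_comm, ← mul_pow]; norm_num
      have h1k : (1 : ℝ) ≤ 2 ^ k := one_le_pow₀ (by norm_num)
      set u : ℝ := (1 / 2) ^ (k + 2)
      set w : ℝ := 2 ^ k
      have hu : 0 < u := by positivity
      -- 2 b y ≤ u b² + y²/u, with 1/u = 4 w
      have h5 : 2 * b * (a - c) ≤ u * b ^ 2 + 4 * w * (a - c) ^ 2 := by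
        have : u * (b - 4 * w * (a - c)) ^ 2 = u * b ^ 2 - 8 * (u * w) * b * (a - c) + 16 * (u * w) * w * (a - c) ^ 2 := by ring
        rw [hε] at this
        have h6 : 0 ≤ u * (b - 4 * w * (a - c)) ^ 2 := by positivity
        linarith
      rw [hc1, hc2]
      nlinarith [sq_nonneg (a + c), mul_nonneg (sub_nonneg.2 h1k) (sq_nonneg (a + c)),
        mul_nonneg (sub_nonneg.2 h1k) (sq_nonneg (a - c)), mul_nonneg (sub_nonneg.2 h1k) (sq_nonneg a),
        mul_nonneg (sub_nonneg.2 h1k) (sq_nonneg c)]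
    · rw [if_neg h]; exact zero_le
  unfold TT
  refine (ENNReal.tsum_le_tsum fun i => ENNReal.tsum_le_tsum fun j => hpt i j).trans ?_
  simp only [ENNReal.tsum_add, ENNReal.tsum_mul_left]
  have hA : (∑' i : ℤ, ∑' j : ℤ, if |(i - 1) / 3 - (j - 1) / 3| ≤ 3 ^ k then
        sqE (coarse g ((i - 1) / 3) - coarse g ((j - 1) / 3)) else 0) =
      9 * ∑' i : ℤ, ∑' j : ℤ, if |i - j| ≤ 3 ^ k then sqE (coarse g i - coarse g j) else 0 := by
    have h1 : ∀ i : ℤ, (∑' j : ℤ, if |(i - 1) / 3 - (j - 1) / 3| ≤ 3 ^ k then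
        sqE (coarse g ((i - 1) / 3) - coarse g ((j - 1) / 3)) else 0) =
        3 * ∑' j : ℤ, if |(i - 1) / 3 - j| ≤ 3 ^ k then sqE (coarse g ((i - 1) / 3) - coarse g j) else 0 :=
      fun i => tsum3_div (fun j => if |(i - 1) / 3 - j| ≤ 3 ^ k then sqE (coarse g ((i - 1) / 3) - coarse g j) else 0)
    simp only [h1]
    rw [tsum3_div (fun i => 3 * ∑' j : ℤ, if |i - j| ≤ 3 ^ k then sqE (coarse g i - coarse g j) else 0),
      ENNReal.tsum_mul_left, ← mul_assoc]
    norm_num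
  have hB : (∑' i : ℤ, ∑' j : ℤ, if |i - j| ≤ (3 ^ (k + 1) : ℕ) then sqE (g i - coarse g ((i - 1) / 3)) else 0) =
      (2 * 3 ^ (k + 1) + 1 : ℕ) * EE g := box_sum _ (fun i => sqE (g i - coarse g ((i - 1) / 3)))
  have hC : (∑' i : ℤ, ∑' j : ℤ, if |i - j| ≤ (3 ^ (k + 1) : ℕ) then sqE (g j - coarse g ((j - 1) / 3)) else 0) =
      (2 * 3 ^ (k + 1) + 1 : ℕ) * EE g := by
    rw [ENNReal.tsum_comm]
    simp only [abs_sub_comm]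
    rw [← hB]
  rw [hA, hB, hC, ← add_mul, ← mul_assoc, ← mul_assoc]
  gcongr
  · rw [mul_comm 9 c1, ENNReal.ofReal_mul (by positivity)]; simp
  · rw [← Nat.cast_add, ← ENNReal.ofReal_natCast, ← ENNReal.ofReal_mul (by positivity)]
    apply ENNReal.ofReal_le_ofReal
    rw [hc2]
    have h6 : (6 : ℝ) ^ k = 2 ^ k * 3 ^ k := by rw [← mul_pow]; norm_num
    have h1k : (1 : ℝ) ≤ 3 ^ k := one_le_pow₀ (by norm_num)
    have h2k : (0 : ℝ) < 2 ^ k := by positivity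
    push_cast
    rw [h6, pow_succ]
    nlinarith

theorem QJ_step (g : ℤ → ℝ) : QJ g ≤ QJ (coarse g) + 500 * DD g := by
  unfold QJ
  rw [tsum_eq_zero_add' ENNReal.summable]
  have h0 : ENNReal.ofReal ((1 + (1 / 2) ^ 0) / 9 ^ 0) * TT 0 g ≤ 4 * DD g := by
    have := TT_zero g
    have e : ENNReal.ofReal ((1 + (1 / 2) ^ 0) / 9 ^ 0) = 2 := by norm_num
    rw [e]
    calc 2 * TT 0 g ≤ 2 * (2 * DD g) := by gcongr
      _ = 4 * DD g := by rw [← mul_assoc]; norm_num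
  have h1 : ∀ k : ℕ, ENNReal.ofReal ((1 + (1 / 2) ^ (k + 1)) / 9 ^ (k + 1)) * TT (k + 1) g ≤
      ENNReal.ofReal ((1 + (1 / 2) ^ k) / 9 ^ k) * TT k (coarse g) +
        ENNReal.ofReal (100 / 3 * (2 / 3) ^ k) * EE g := by
    intro k
    have hu : (0 : ℝ) < (1 / 2) ^ k := by positivity
    have hu1 : ((1 : ℝ) / 2) ^ k ≤ 1 := pow_le_one₀ (by norm_num) (by norm_num)
    refine (mul_le_mul_right (TT_step k g) _).trans ?_
    rw [mul_add, ← mul_assoc, ← mul_assoc, ← ENNReal.ofReal_mul (by positivity),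
      ← ENNReal.ofReal_mul (by positivity)]
    refine add_le_add (mul_le_mul_left (ENNReal.ofReal_le_ofReal ?_) _)
      (mul_le_mul_left (ENNReal.ofReal_le_ofReal ?_) _)
    · rw [pow_succ (9 : ℝ), div_mul_eq_mul_div, div_le_div_iff₀ (by positivity) (by positivity),
        pow_succ, pow_succ _ (k + 1), pow_succ]
      have h9 : (0 : ℝ) < 9 ^ k := by positivity
      have : (1 + (1 / 2) ^ k * (1 / 2)) * (1 + (1 / 2) ^ k * (1 / 2) * (1 / 2)) ≤ 1 + ((1 : ℝ) / 2) ^ k := by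
        nlinarith
      nlinarith
    · have e : ((2 : ℝ) / 3) ^ k = 6 ^ k / 9 ^ k := by rw [← div_pow]; norm_num
      rw [e, pow_succ (9 : ℝ), pow_succ]
      have h9 : (0 : ℝ) < 9 ^ k := by positivity
      have h6 : (0 : ℝ) < 6 ^ k := by positivity
      rw [div_mul_eq_mul_div, ← mul_div_assoc (100 / 3 : ℝ), div_le_div_iff₀ (by positivity) (by positivity)]
      have : 0 < (6 : ℝ) ^ k * 9 ^ k := by positivity
      nlinarith
  have h2 := ENNReal.tsum_le_tsum h1
  rw [ENNReal.tsum_add, ENNReal.tsum_mul_right] at h2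
  have h3 : ∑' k : ℕ, ENNReal.ofReal (100 / 3 * (2 / 3) ^ k) = 100 := by
    rw [← ENNReal.ofReal_tsum_of_nonneg (fun k => by positivity)
      ((summable_geometric_of_lt_one (by norm_num) (by norm_num)).mul_left _), tsum_mul_left,
      tsum_geometric_of_lt_one (by norm_num) (by norm_num)]
    norm_num
  rw [h3] at h2
  have h4 : (100 : ℝ≥0∞) * EE g ≤ 300 * DD g := by
    calc (100 : ℝ≥0∞) * EE g ≤ 100 * (3 * DD g) := by gcongr; exact EE_le g
      _ = 300 * DD g := by rw [← mul_assoc]; norm_num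
  calc _ ≤ 4 * DD g + (∑' k : ℕ, ENNReal.ofReal ((1 + (1 / 2) ^ k) / 9 ^ k) * TT k (coarse g) + 300 * DD g) :=
        add_le_add h0 (h2.trans (by gcongr))
    _ = ∑' k : ℕ, ENNReal.ofReal ((1 + (1 / 2) ^ k) / 9 ^ k) * TT k (coarse g) + 304 * DD g := by
        rw [add_left_comm, ← add_mul]; norm_num
    _ ≤ _ := by gcongr; norm_num

/-! ### Part G: the hierarchical sublattice -/

open scoped ENNReal

/-- index set of the hierarchical sublattice -/
def J : ℕ → Type
  | 0 => Empty
  | L + 1 => Option (J L × Fin 3)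

noncomputable instance instFintypeJ : (L : ℕ) → Fintype (J L)
  | 0 => (inferInstance : Fintype Empty)
  | L + 1 => letI := instFintypeJ L; (inferInstance : Fintype (Option (J L × Fin 3)))

/-- position -/
def jpos : (L : ℕ) → J L → ℕ
  | 0, _ => 0
  | _ + 1, none => 0
  | L + 1, some p => 3 * jpos L p.1 + 1 + p.2

theorem jpos_inj : ∀ L : ℕ, Function.Injective (jpos L)
  | 0 => fun a => a.elim
  | L + 1 => by
    intro a b h
    match a, b, h with
    | none, none, _ => rfl
    | none, some q, h => simp only [jpos] at h; omega
    | some q, none, h => simp only [jpos] at h; omega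
    | some ⟨m, s⟩, some ⟨m', s'⟩, h =>
      simp only [jpos] at h
      have h1 : jpos L m = jpos L m' := by omega
      have h2 : s = s' := by ext; omega
      rw [jpos_inj L h1, h2]

theorem jpos_lt : ∀ (L : ℕ) (t : J L), 2 * jpos L t + 3 ≤ 3 ^ L
  | 0, t => t.elim
  | L + 1, none => by
    simp only [jpos, pow_succ]
    have : 0 < 3 ^ L := by positivity
    omega
  | L + 1, some ⟨m, s⟩ => by
    have := jpos_lt L m
    simp only [jpos, pow_succ]
    omega

theorem sum_J_succ {A : Type*} [AddCommMonoid A] (L : ℕ) (f : J (L + 1) → A) :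
    ∑ t, f t = f none + ∑ m : J L, ∑ s : Fin 3, f (some (m, s)) := by
  have h : ∑ t : J (L + 1), f t = f none + ∑ p : J L × Fin 3, f (some p) :=
    Fintype.sum_option (α := J L × Fin 3) f
  rw [h, Fintype.sum_prod_type]

theorem prod_J_succ (L : ℕ) (f : J (L + 1) → ℝ) :
    ∏ t, f t = f none * ∏ m : J L, ∏ s : Fin 3, f (some (m, s)) := by
  have h : ∏ t : J (L + 1), f t = f none * ∏ p : J L × Fin 3, f (some p) :=
    Fintype.prod_option (α := J L × Fin 3) f
  rw [h, Fintype.prod_prod_type]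

/-- folding at -1/2 -/
def fold (i : ℤ) : ℕ := if 0 ≤ i then i.toNat else (-1 - i).toNat

theorem fold_coarse (m : ℤ) : fold (3 * m + 1) = 3 * fold m + 1 := by
  unfold fold
  split_ifs <;> omega

/-- half-line heights -/
noncomputable def hh (L : ℕ) (η : J L → ℝ) (p : ℕ) : ℝ := ∑ t, if p ≤ jpos L t then η t else 0

/-- coarsening on the index level -/
def coL (L : ℕ) : (J (L + 1) → ℝ) →ₗ[ℝ] (J L → ℝ) where
  toFun η m := ∑ s : Fin 3, η (some (m, s))
  map_add' a b := by
    ext m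
    exact Finset.sum_add_distrib (f := fun s : Fin 3 => a (some (m, s))) (g := fun s => b (some (m, s)))
  map_smul' c b := by
    ext m
    exact (Finset.smul_sum (r := c) (f := fun s : Fin 3 => b (some (m, s)))).symm

theorem hh_coarse (L : ℕ) (η : J (L + 1) → ℝ) (n : ℕ) :
    hh (L + 1) η (3 * n + 1) = hh L (coL L η) n := by
  unfold hh
  rw [sum_J_succ]
  have h0 : ¬ (3 * n + 1 ≤ jpos (L + 1) none) := by simp only [jpos]; omega
  rw [if_neg h0, zero_add]
  refine Finset.sum_congr rfl fun m _ => ?_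
  have h1 : ∀ s : Fin 3, (3 * n + 1 ≤ jpos (L + 1) (some (m, s))) ↔ n ≤ jpos L m := by
    intro s
    simp only [jpos]
    omega
  simp only [h1]
  split_ifs
  · rfl
  · simp

theorem gg_coarse (L : ℕ) (η : J (L + 1) → ℝ) :
    coarse (fun i => hh (L + 1) η (fold i)) = fun i => hh L (coL L η) (fold i) := by
  funext m
  unfold coarse
  beta_reduce
  rw [fold_coarse, hh_coarse]

theorem hh_diff (L : ℕ) (η : J L → ℝ) (n : ℕ) :
    hh L η n - hh L η (n + 1) = ∑ t, if jpos L t = n then η t else 0 := by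
  unfold hh
  rw [← Finset.sum_sub_distrib]
  refine Finset.sum_congr rfl fun t _ => ?_
  split_ifs <;> first | omega | simp

theorem sq_diff (L : ℕ) (η : J L → ℝ) (n : ℕ) :
    sqE (∑ t, if jpos L t = n then η t else 0) = ∑ t, if jpos L t = n then sqE (η t) else 0 := by
  by_cases h : ∃ t0, jpos L t0 = n
  · obtain ⟨t0, h0⟩ := h
    rw [Finset.sum_eq_single t0, Finset.sum_eq_single t0]
    · rw [if_pos h0, if_pos h0]
    · intro b _ hb
      rw [if_neg]
      intro h; exact hb (jpos_inj L (h.trans h0.symm))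
    · simp
    · intro b _ hb
      rw [if_neg]
      intro h; exact hb (jpos_inj L (h.trans h0.symm))
    · simp
  · push Not at h
    rw [Finset.sum_eq_zero (fun t _ => if_neg (h t)), Finset.sum_eq_zero (fun t _ => if_neg (h t)), sqE_zero]

theorem half_DD (L : ℕ) (η : J L → ℝ) :
    ∑' n : ℕ, sqE (hh L η n - hh L η (n + 1)) = ∑ t, sqE (η t) := by
  simp only [hh_diff, sq_diff]
  rw [Summable.tsum_finsetSum (fun i _ => ENNReal.summable)]
  refine Finset.sum_congr rfl fun t _ => ?_
  rw [tsum_eq_single (jpos L t)]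
  · simp
  · intro n hn; rw [if_neg hn.symm]

theorem DD_gg (L : ℕ) (η : J L → ℝ) :
    DD (fun i => hh L η (fold i)) = 2 * ∑ t, sqE (η t) := by
  unfold DD
  rw [tsum_of_nat_of_neg_add_one ENNReal.summable ENNReal.summable, two_mul]
  congr 1
  · rw [← half_DD]
    refine tsum_congr fun n => ?_
    rw [sqE_neg]
    beta_reduce
    have h1 : fold (n : ℤ) = n := by unfold fold; split_ifs <;> omega
    have h2 : fold (n + 1 : ℤ) = n + 1 := by unfold fold; split_ifs <;> omega
    rw [h1, h2]
  · rw [tsum_eq_zero_add' ENNReal.summable, ← half_DD]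
    have h0 : fold (-((0 : ℕ) + 1) + 1 : ℤ) = fold (-((0 : ℕ) + 1) : ℤ) := by simp [fold]
    beta_reduce
    rw [h0, sub_self, sqE_zero, zero_add]
    refine tsum_congr fun n => ?_
    have h1 : fold (-((n + 1 : ℕ) + 1) + 1 : ℤ) = n := by unfold fold; split_ifs <;> omega
    have h2 : fold (-((n + 1 : ℕ) + 1) : ℤ) = n + 1 := by unfold fold; split_ifs <;> omega
    rw [h1, h2]

/-- hierarchical energy -/
noncomputable def enQ : (L : ℕ) → QuadraticForm ℝ (J L → ℝ)
  | 0 => 0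
  | L + 1 => ∑ t, (QuadraticMap.sq (R := ℝ)).comp (LinearMap.proj (R := ℝ) (φ := fun _ : J (L + 1) => ℝ) t) +
      (enQ L).comp (coL L)

theorem enQ_succ (L : ℕ) (η : J (L + 1) → ℝ) :
    enQ (L + 1) η = ∑ t, η t ^ 2 + enQ L (coL L η) := by
  simp [enQ, sq]

theorem enQ_nonneg : ∀ (L : ℕ) (η : J L → ℝ), 0 ≤ enQ L η
  | 0, η => by simp [enQ]
  | L + 1, η => by
    rw [enQ_succ]
    have := enQ_nonneg L (coL L η)
    positivity

theorem QJ_le_en : ∀ (L : ℕ) (η : J L → ℝ),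
    QJ (fun i => hh L η (fold i)) ≤ 1000 * ENNReal.ofReal (enQ L η)
  | 0, η => by
    have h : (fun i => hh 0 η (fold i)) = fun _ => 0 := by
      funext i
      exact Fintype.sum_empty (ι := Empty) _
    rw [h]
    simp [QJ, TT, sqE_zero]
  | L + 1, η => by
    refine (QJ_step _).trans ?_
    rw [gg_coarse, DD_gg, enQ_succ, ENNReal.ofReal_add (by positivity) (enQ_nonneg _ _), mul_add, add_comm,
      ENNReal.ofReal_sum_of_nonneg (fun _ _ => by positivity), ← mul_assoc]
    refine add_le_add (le_of_eq ?_) (QJ_le_en L _)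
    unfold sqE
    norm_num

theorem fold_big (N : ℕ) (i : ℤ) (hi : i ∉ Finset.Icc (-N : ℤ) N) : N ≤ fold i := by
  rw [Finset.mem_Icc] at hi
  unfold fold
  split_ifs <;> omega

theorem hh_zero (K N : ℕ) (hK : 3 ^ K ≤ 2 * N + 1) (η : J K → ℝ) (p : ℕ) (hp : N ≤ p) : hh K η p = 0 := by
  unfold hh
  refine Finset.sum_eq_zero fun t _ => if_neg ?_
  have := jpos_lt K t
  omega

/-- real embedding -/
noncomputable def gR (K N : ℕ) : (J K → ℝ) →ₗ[ℝ] (SS N → ℝ) where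
  toFun η i := hh K η (fold i)
  map_add' a b := by
    ext i
    simp only [hh, Pi.add_apply, ← Finset.sum_add_distrib]
    refine Finset.sum_congr rfl fun t _ => ?_
    split_ifs <;> simp
  map_smul' c a := by
    ext i
    simp only [hh, Pi.smul_apply, smul_eq_mul, Finset.mul_sum, RingHom.id_apply]
    refine Finset.sum_congr rfl fun t _ => ?_
    split_ifs <;> simp

/-- integer embedding -/
noncomputable def gZ (K N : ℕ) : (J K → ℤ) →+ (SS N → ℤ) where
  toFun η i := ∑ t, if fold i ≤ jpos K t then η t else 0
  map_zero' := by ext; simp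
  map_add' a b := by
    ext i
    simp only [Pi.add_apply, ← Finset.sum_add_distrib]
    refine Finset.sum_congr rfl fun t _ => ?_
    split_ifs <;> simp

theorem castV_gZ (K N : ℕ) (η : J K → ℤ) : castV _ (gZ K N η) = gR K N (castV _ η) := by
  ext i
  simp only [castV_apply, gZ, gR, hh, AddMonoidHom.coe_mk, ZeroHom.coe_mk, LinearMap.coe_mk, AddHom.coe_mk]
  push_cast
  rfl

theorem QB_gR (K N : ℕ) (hK : 3 ^ K ≤ 2 * N + 1) (η : J K → ℝ) :
    QB (extL N (gR K N η)) ≤ 9000 * enQ K η := by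
  have h1 : (⇑(extL N (gR K N η)) : ℤ → ℝ) = fun i => hh K η (fold i) := by
    funext i
    by_cases h : i ∈ Finset.Icc (-N : ℤ) N
    · exact extL_mem _ ⟨i, h⟩
    · rw [extL_not _ _ h, hh_zero K N hK η _ (fold_big N i h)]
  have h2 := QB_le_QJ (extL N (gR K N η))
  rw [h1] at h2
  have h3 := h2.trans (mul_le_mul_right (QJ_le_en K η) 9)
  rw [← mul_assoc, show (9 : ℝ≥0∞) * 1000 = ENNReal.ofReal 9000 by norm_num,
    ← ENNReal.ofReal_mul (by norm_num)] at h3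
  exact (ENNReal.ofReal_le_ofReal_iff (mul_nonneg (by norm_num) (enQ_nonneg _ _))).1 h3

theorem gZ_inj (K N : ℕ) (hK : 3 ^ K ≤ 2 * N + 1) : Function.Injective (gZ K N) := by
  rw [injective_iff_map_eq_zero]
  intro η h
  funext t
  have hp := jpos_lt K t
  have h1 := congrFun h ⟨(jpos K t : ℤ), by rw [Finset.mem_Icc]; omega⟩
  have h2 := congrFun h ⟨(jpos K t + 1 : ℤ), by rw [Finset.mem_Icc]; omega⟩
  simp only [gZ, AddMonoidHom.coe_mk, ZeroHom.coe_mk, Pi.zero_apply] at h1 h2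
  have f1 : fold (jpos K t : ℤ) = jpos K t := by unfold fold; split_ifs <;> omega
  have f2 : fold (jpos K t + 1 : ℤ) = jpos K t + 1 := by unfold fold; split_ifs <;> omega
  rw [f1] at h1
  rw [f2] at h2
  have h3 : ∑ u, ((if jpos K t ≤ jpos K u then η u else 0) - (if jpos K t + 1 ≤ jpos K u then η u else 0)) = 0 := by
    rw [Finset.sum_sub_distrib, h1, h2, sub_zero]
  rw [Finset.sum_eq_single t] at h3
  · simpa using h3
  · intro u _ hu
    have : jpos K u ≠ jpos K t := fun h => hu (jpos_inj K h)
    split_ifs <;> omega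
  · simp

theorem gZ_origin (K N : ℕ) (η : J K → ℤ) : gZ K N η (i0 N) = ∑ t, η t := by
  simp [gZ, i0, fold]

/-! ### Part H: lower bound -/

/-- single-site weights -/
noncomputable def vv (a c : ℝ) (n : ℤ) : ℝ := if n = 0 then a else if n = 1 then c else if n = -1 then c else 0

/-- the support -/
def S3 : Finset ℤ := {-1, 0, 1}

theorem vv_off {a c : ℝ} {n : ℤ} (h : n ∉ S3) : vv a c n = 0 := by
  simp only [S3, Finset.mem_insert, Finset.mem_singleton, not_or] at h
  simp [vv, h]

theorem sum_S3 (f : ℤ → ℝ) : ∑ n ∈ S3, f n = f (-1) + (f 0 + f 1) := by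
  unfold S3
  rw [Finset.sum_insert (by decide), Finset.sum_insert (by decide), Finset.sum_singleton]

/-- three-fold convolution -/
noncomputable def u3 (v : ℤ → ℝ) (n : ℤ) : ℝ :=
  ∑ τ ∈ Fintype.piFinset (fun _ : Fin 3 => S3), if ∑ s, τ s = n then ∏ s, v (τ s) else 0

theorem sum_pi3 (f : (Fin 3 → ℤ) → ℝ) :
    ∑ τ ∈ Fintype.piFinset (fun _ : Fin 3 => S3), f τ =
      ∑ x ∈ S3, ∑ y ∈ S3, ∑ z ∈ S3, f ![x, y, z] := by
  have : ∀ x, ∑ y ∈ S3, ∑ z ∈ S3, f ![x, y, z] = ∑ p ∈ S3 ×ˢ S3, f ![x, p.1, p.2] := fun x => by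
    rw [Finset.sum_product]
  simp only [this]
  rw [← Finset.sum_product' (f := fun x (p : ℤ × ℤ) => f ![x, p.1, p.2])]
  refine Finset.sum_nbij' (fun τ => (τ 0, τ 1, τ 2)) (fun p => ![p.1, p.2.1, p.2.2]) ?_ ?_ ?_ ?_ ?_
  · intro τ h; rw [Fintype.mem_piFinset] at h; simp [h 0, h 1, h 2]
  · intro p h
    simp only [Finset.mem_product] at h
    rw [Fintype.mem_piFinset]; intro i; fin_cases i <;> simp [h]
  · intro τ _; ext i; fin_cases i <;> simp
  · intro p _; simp
  · intro τ _; congr 1; ext i; fin_cases i <;> simp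

theorem u3_vv (a c q : ℝ) (n : ℤ) : vv 1 (q / 2) n * u3 (vv a c) n =
    vv (a ^ 3 + 6 * a * c ^ 2) (q / 2 * (3 * a ^ 2 * c + 3 * c ^ 3)) n := by
  by_cases hn : n ∈ S3
  · unfold u3
    rw [sum_pi3]
    simp only [sum_S3, Fin.sum_univ_three, Fin.prod_univ_three]
    simp only [S3, Finset.mem_insert, Finset.mem_singleton] at hn
    rcases hn with rfl | rfl | rfl <;> simp [vv, -mul_eq_mul_left_iff] <;> ring
  · rw [vv_off hn, vv_off hn, zero_mul]

theorem block_sum {M : Type} [Fintype M] [DecidableEq M] (v : ℤ → ℝ) (G : (M → ℤ) → ℝ)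
    (hG : ∀ ζ, (∃ m, ζ m ∉ S3) → G ζ = 0) :
    ∑ Θ ∈ Fintype.piFinset (fun _ : M => Fintype.piFinset (fun _ : Fin 3 => S3)),
      (∏ m, ∏ s, v (Θ m s)) * G (fun m => ∑ s, Θ m s) =
    ∑ ζ ∈ Fintype.piFinset (fun _ : M => S3), (∏ m, u3 v (ζ m)) * G ζ := by
  unfold u3
  simp only [Finset.prod_univ_sum, Finset.sum_mul]
  rw [Finset.sum_comm]
  refine Finset.sum_congr rfl fun Θ _ => ?_
  simp only [Finset.prod_ite_zero, ite_mul, zero_mul]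
  by_cases h : (fun m => ∑ s, Θ m s) ∈ Fintype.piFinset (fun _ : M => S3)
  · rw [Finset.sum_eq_single_of_mem _ h]
    · rw [if_pos]; intro m _; rfl
    · intro b _ hb
      rw [if_neg]
      intro h'; exact hb (funext fun m => (h' m (Finset.mem_univ _)).symm)
  · rw [hG, mul_zero]
    · symm
      apply Finset.sum_eq_zero
      intro ζ hζ
      rw [if_neg]
      intro h'
      apply h
      convert hζ using 1
      exact funext fun m => (h' m (Finset.mem_univ _))
    · rw [Fintype.mem_piFinset] at h; push Not at h; exact h

/-- integer coarsening -/
def coZ (L : ℕ) : (J (L + 1) → ℤ) →+ (J L → ℤ) where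
  toFun η m := ∑ s : Fin 3, η (some (m, s))
  map_zero' := by
    ext m
    exact Finset.sum_const_zero
  map_add' a b := by
    ext m
    exact Finset.sum_add_distrib (f := fun s : Fin 3 => a (some (m, s))) (g := fun s => b (some (m, s)))

theorem coZ_apply (L : ℕ) (η : J (L + 1) → ℤ) (m : J L) : coZ L η m = ∑ s : Fin 3, η (some (m, s)) := rfl

/-- coarse part of the hierarchical weight -/
noncomputable def fG (f : ℤ → ℝ) : (L : ℕ) → (J L → ℤ) → ℝ
  | 0, _ => 1
  | L + 1, η => (∏ m, f (coZ L η m)) * fG f L (coZ L η)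

/-- box -/
noncomputable def PJ (L : ℕ) : Finset (J L → ℤ) :=
  letI : DecidableEq (J L) := Classical.decEq _
  Fintype.piFinset (fun _ : J L => S3)

theorem mem_PJ {L : ℕ} {η : J L → ℤ} : η ∈ PJ L ↔ ∀ t, η t ∈ S3 := by
  classical
  unfold PJ
  rw [Fintype.mem_piFinset]

theorem sum_PJ_succ (L : ℕ) (A : (J (L + 1) → ℤ) → ℝ) (v : ℤ → ℝ) (G : ℤ → (J L → ℤ) → ℝ)
    (hG : ∀ n ζ, (∃ m, ζ m ∉ S3) → G n ζ = 0)
    (hA : ∀ η, A η = v (η none) * ((∏ m, ∏ s, v (η (some (m, s)))) * G (η none) (coZ L η))) :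
    ∑ η ∈ PJ (L + 1), A η = ∑ n ∈ S3, v n * ∑ ζ ∈ PJ L, (∏ m, u3 v (ζ m)) * G n ζ := by
  classical
  have h1 : ∀ n, ∑ ζ ∈ PJ L, (∏ m, u3 v (ζ m)) * G n ζ = 
      ∑ Θ ∈ Fintype.piFinset (fun _ : J L => Fintype.piFinset (fun _ : Fin 3 => S3)),
      (∏ m, ∏ s, v (Θ m s)) * G n (fun m => ∑ s, Θ m s) := by
    intro n
    rw [block_sum v (G n) (hG n)]
    refine Finset.sum_congr ?_ fun _ _ => rfl
    ext; rw [mem_PJ, Fintype.mem_piFinset]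
  simp only [h1, Finset.mul_sum]
  rw [← Finset.sum_product' (f := fun n (Θ : J L → Fin 3 → ℤ) => v n * ((∏ m, ∏ s, v (Θ m s)) * G n (fun m => ∑ s, Θ m s)))]
  refine Finset.sum_nbij' (fun η => (η none, fun m s => η (some (m, s))))
    (fun p t => match t with
      | none => p.1
      | some (m, s) => p.2 m s) ?_ ?_ ?_ ?_ ?_
  · intro η h
    rw [mem_PJ] at h
    rw [Finset.mem_product]
    refine ⟨h _, ?_⟩
    rw [Fintype.mem_piFinset]; intro m; rw [Fintype.mem_piFinset]; intro s; exact h _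
  · intro p h
    rw [Finset.mem_product] at h
    obtain ⟨ha, hb⟩ := h
    rw [Fintype.mem_piFinset] at hb
    rw [mem_PJ]
    intro t
    match t with
    | none => exact ha
    | some (m, s) => 
      have := hb m
      rw [Fintype.mem_piFinset] at this
      exact this s
  · intro η _
    funext t
    match t with
    | none => rfl
    | some (m, s) => rfl
  · intro p _; rfl
  · intro η _; rw [hA]; rfl

/-- weighted sums -/
noncomputable def Wt (f v : ℤ → ℝ) (L : ℕ) (Φ : ℤ → ℝ) : ℝ :=
  ∑ η ∈ PJ L, Φ (∑ t, η t) * ((∏ t, v (η t)) * fG f L η)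

theorem Wt_succ (f v : ℤ → ℝ) (hf : ∀ n, n ∉ S3 → f n = 0) (L : ℕ) (Φ : ℤ → ℝ) :
    Wt f v (L + 1) Φ = ∑ n ∈ S3, v n * Wt f (fun k => f k * u3 v k) L (fun x => Φ (n + x)) := by
  unfold Wt
  rw [sum_PJ_succ L _ v (fun n ζ => Φ (n + ∑ m, ζ m) * ((∏ m, f (ζ m)) * fG f L ζ))]
  · refine Finset.sum_congr rfl fun n _ => ?_
    congr 1
    refine Finset.sum_congr rfl fun ζ _ => ?_
    rw [Finset.prod_mul_distrib]; ring
  · rintro n ζ ⟨m, hm⟩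
    rw [Finset.prod_eq_zero (Finset.mem_univ m) (hf _ hm)]; simp
  · intro η
    rw [prod_J_succ, sum_J_succ]
    simp only [fG, coZ_apply]
    ring

theorem Wt_add (f v : ℤ → ℝ) (L : ℕ) (Φ Ψ : ℤ → ℝ) :
    Wt f v L (fun x => Φ x + Ψ x) = Wt f v L Φ + Wt f v L Ψ := by
  unfold Wt; rw [← Finset.sum_add_distrib]; refine Finset.sum_congr rfl fun _ _ => by ring

theorem Wt_smul (f v : ℤ → ℝ) (L : ℕ) (k : ℝ) (Φ : ℤ → ℝ) :
    Wt f v L (fun x => k * Φ x) = k * Wt f v L Φ := by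
  unfold Wt; rw [Finset.mul_sum]; refine Finset.sum_congr rfl fun _ _ => by ring

theorem Wt_lower (q : ℝ) (hq : 0.95 ≤ q) (hq1 : q ≤ 1) : ∀ (L : ℕ) (a c : ℝ), 0 < a → 0.1 * a ≤ c → c ≤ a →
    0 < Wt (vv 1 (q / 2)) (vv a c) L (fun _ => 1) ∧
    (L / 6 : ℝ) * Wt (vv 1 (q / 2)) (vv a c) L (fun _ => 1) ≤ Wt (vv 1 (q / 2)) (vv a c) L (fun x => (x : ℝ) ^ 2)
  | 0, a, c => by
    intro _ _ _
    have : IsEmpty (J 0) := (inferInstance : IsEmpty Empty)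
    have hP : PJ 0 = {fun t => t.elim} := by
      ext η; rw [mem_PJ]; simp only [Finset.mem_singleton]
      constructor
      · intro _; funext t; exact t.elim
      · intro _ t; exact t.elim
    simp [Wt, hP, fG]
  | L + 1, a, c => by
    intro ha hc hca
    obtain ⟨h1, h2⟩ := Wt_lower q hq hq1 L (a ^ 3 + 6 * a * c ^ 2) (q / 2 * (3 * a ^ 2 * c + 3 * c ^ 3))
      (by positivity) (by
        have hc0 : 0 < c := by linarith
        have e1 : 0 ≤ c * (0.425 * a ^ 2 - 0.6 * a * c + 1.425 * c ^ 2) := by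
          refine mul_nonneg hc0.le ?_
          nlinarith [sq_nonneg (a - c), sq_nonneg a, sq_nonneg c]
        have e2 : 0 ≤ (q - 0.95) * (c * (a ^ 2 + c ^ 2)) := mul_nonneg (by linarith) (by positivity)
        have e3 : 0 ≤ a ^ 2 * (c - 0.1 * a) := mul_nonneg (by positivity) (by linarith)
        nlinarith) (by
        have hc0 : 0 < c := by linarith
        have e2 : 0 ≤ (1 - q) * (c * (a ^ 2 + c ^ 2)) := mul_nonneg (by linarith) (by positivity)
        have e3 : 0 ≤ c ^ 2 * (a - c) := mul_nonneg (by positivity) (by linarith)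
        have e4 : 0 ≤ a * (a ^ 2 - 1.5 * a * c + 4.5 * c ^ 2) := by
          refine mul_nonneg ha.le ?_
          nlinarith [sq_nonneg (a - c), sq_nonneg (a - 2 * c), sq_nonneg a, sq_nonneg c]
        nlinarith)
    have hoff : ∀ n, n ∉ S3 → vv 1 (q / 2) n = 0 := fun n hn => vv_off hn
    rw [Wt_succ _ _ hoff, Wt_succ _ _ hoff, sum_S3, sum_S3]
    simp only [u3_vv]
    have v0 : vv a c 0 = a := by simp [vv]
    have v1 : vv a c 1 = c := by simp [vv]
    have v2 : vv a c (-1) = c := by simp [vv]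
    rw [v0, v1, v2]
    generalize vv (a ^ 3 + 6 * a * c ^ 2) (q / 2 * (3 * a ^ 2 * c + 3 * c ^ 3)) = v at *
    set f := vv 1 (q / 2)
    have e : ∀ (A B : ℝ), c * A + (a * Wt f v L (fun x : ℤ => (((0 : ℤ) + x : ℤ) : ℝ) ^ 2) + c * B) =
        a * Wt f v L (fun x : ℤ => (x : ℝ) ^ 2) + c * (A + B) := by
      intro A B; simp only [zero_add]; ring
    rw [e, ← Wt_add]
    have e' : (fun x : ℤ => ((-1 + x : ℤ) : ℝ) ^ 2 + ((1 + x : ℤ) : ℝ) ^ 2) =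
        fun x : ℤ => 2 * (x : ℝ) ^ 2 + 2 * 1 := by
      funext x; push_cast; ring
    rw [e', Wt_add, Wt_smul, Wt_smul f v L 2 (fun _ => 1)]
    set Z := Wt f v L (fun _ => 1)
    set M := Wt f v L (fun x : ℤ => (x : ℝ) ^ 2)
    constructor
    · have : 0 < c := by linarith
      positivity
    · push_cast
      have e5 := mul_le_mul_of_nonneg_left h2 (show 0 ≤ a + 2 * c by linarith)
      have e6 : 0 ≤ (10 * c - a) * Z := mul_nonneg (by linarith) h1.le
      nlinarith

theorem prod_vv_off {L : ℕ} {a c : ℝ} {f : ℤ → ℝ} (η : J L → ℤ) (h : η ∉ PJ L) :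
    (∏ t, vv a c (η t)) * fG f L η = 0 := by
  rw [mem_PJ] at h; push Not at h
  obtain ⟨t, ht⟩ := h
  rw [Finset.prod_eq_zero (Finset.mem_univ t) (vv_off ht), zero_mul]

theorem PDF_vv : PDF (vv 1 (1 / 2)) := by
  classical
  refine ⟨?_, fun x => ?_⟩
  · ext i j
    simp only [Matrix.conjTranspose_apply, Matrix.of_apply, vv, star_trivial]
    split_ifs <;> first | rfl | omega
  · simp only [star_trivial, Matrix.of_apply, Finsupp.sum]
    set s := x.support
    set T : Finset ℤ := s ∪ s.image (fun i => i - 1)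
    let g : ℤ → ℤ → ℝ := fun k m => (if m = k then 1 else 0) + (if m - 1 = k then 1 else 0)
    have key : ∀ i ∈ s, ∀ j ∈ s, vv 1 (1 / 2) (i - j) = 1 / 2 * ∑ k ∈ T, g k i * g k j := by
      intro i hi j hj
      have i1 : i ∈ T := Finset.mem_union_left _ hi
      have i2 : i - 1 ∈ T := Finset.mem_union_right _ (Finset.mem_image_of_mem _ hi)
      have : ∑ k ∈ T, g k i * g k j = g i j + g (i - 1) j := by
        simp only [g, add_mul, Finset.sum_add_distrib, ite_mul, one_mul, zero_mul,
          Finset.sum_ite_eq, i1, i2, if_true]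
      rw [this]
      simp only [g, vv]
      split_ifs <;> first | omega | norm_num
    have : ∑ i ∈ s, ∑ j ∈ s, x i * vv 1 (1 / 2) (i - j) * x j =
        1 / 2 * ∑ k ∈ T, (∑ i ∈ s, x i * g k i) ^ 2 := by
      have : ∀ k, (∑ i ∈ s, x i * g k i) ^ 2 = ∑ i ∈ s, ∑ j ∈ s, (x i * g k i) * (x j * g k j) := by
        intro k; rw [sq, Finset.sum_mul_sum]
      simp only [this]
      rw [Finset.sum_comm (s := T), Finset.mul_sum]
      refine Finset.sum_congr rfl fun i hi => ?_
      rw [Finset.sum_comm (s := T), Finset.mul_sum]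
      refine Finset.sum_congr rfl fun j hj => ?_
      rw [key i hi j hj, Finset.mul_sum, Finset.mul_sum, Finset.sum_mul, Finset.mul_sum]
      refine Finset.sum_congr rfl fun k _ => ?_
      ring
    rw [this]
    positivity

theorem PDF_prod_vv (L : ℕ) : PDF (fun η : J L → ℤ => ∏ t, vv 1 (1 / 2) (η t)) :=
  PDF.prod Finset.univ (F := fun (t : J L) (η : J L → ℤ) => vv 1 (1 / 2) (η t)) fun t => 
    PDF_vv.comp (Pi.evalAddMonoidHom (fun _ : J L => ℤ) t)

theorem PDF_fG : ∀ L : ℕ, PDF (fG (vv 1 (1 / 2)) L)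
  | 0 => PDF.one
  | L + 1 => ((PDF_prod_vv L).comp (coZ L)).mul ((PDF_fG L).comp (coZ L))

theorem vv_nonneg (n : ℤ) : 0 ≤ vv 1 (1 / 2) n := by unfold vv; split_ifs <;> norm_num
theorem vv_le (n : ℤ) : vv 1 (1 / 2) n ≤ 1 := by unfold vv; split_ifs <;> norm_num

theorem fG_bd : ∀ (L : ℕ) (η : J L → ℤ), 0 ≤ fG (vv 1 (1 / 2)) L η ∧ fG (vv 1 (1 / 2)) L η ≤ 1
  | 0, _ => by simp [fG]
  | L + 1, η => by
    obtain ⟨h1, h2⟩ := fG_bd L (coZ L η)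
    have h3 : 0 ≤ ∏ m, vv 1 (1 / 2) (coZ L η m) := Finset.prod_nonneg fun _ _ => vv_nonneg _
    have h4 : ∏ m, vv 1 (1 / 2) (coZ L η m) ≤ 1 := Finset.prod_le_one (fun _ _ => vv_nonneg _) fun _ _ => vv_le _
    exact ⟨mul_nonneg h3 h1, mul_le_one₀ h4 h1 h2⟩

theorem vv_exp (b : ℝ) (n : ℤ) : Real.exp (-(b * (n : ℝ) ^ 2)) * vv 1 (1 / 2) n = vv 1 (Real.exp (-b) / 2) n := by
  unfold vv
  split_ifs with h1 h2 h3
  · simp [h1]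
  · simp [h2]; ring
  · simp [h3]; ring
  · simp

theorem prod_exp (b : ℝ) (L : ℕ) (η : J L → ℤ) :
    Real.exp (-(b * ∑ t, (η t : ℝ) ^ 2)) * ∏ t, vv 1 (1 / 2) (η t) = ∏ t, vv 1 (Real.exp (-b) / 2) (η t) := by
  rw [Finset.mul_sum, ← Finset.sum_neg_distrib, Real.exp_sum, ← Finset.prod_mul_distrib]
  exact Finset.prod_congr rfl fun t _ => vv_exp b (η t)

theorem castV_coZ (L : ℕ) (η : J (L + 1) → ℤ) : coL L (castV _ η) = castV _ (coZ L η) := by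
  funext m
  rw [castV_apply, coZ_apply]
  push_cast
  rfl

theorem exp_fG (b : ℝ) : ∀ (L : ℕ) (η : J (L + 1) → ℤ),
    Real.exp (-(b * enQ L (coL L (castV _ η)))) * fG (vv 1 (1 / 2)) (L + 1) η =
      fG (vv 1 (Real.exp (-b) / 2)) (L + 1) η
  | 0, η => by
    have : enQ 0 (coL 0 (castV _ η)) = 0 := by
      have : coL 0 (castV _ η) = 0 := by funext t; exact t.elim
      rw [this, map_zero]
    rw [this]
    have : IsEmpty (J 0) := (inferInstance : IsEmpty Empty)
    simp [fG]
  | L + 1, η => by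
    have ih := exp_fG b L (coZ (L + 1) η)
    rw [castV_coZ, enQ_succ, mul_add, neg_add, Real.exp_add]
    have h2 := prod_exp b (L + 1) (coZ (L + 1) η)
    rw [fG, fG.eq_2 (vv 1 (Real.exp (-b) / 2)), ← ih, ← h2]
    simp only [castV_apply]
    ring

theorem exp_full (b : ℝ) (L : ℕ) (η : J L → ℤ) :
    Real.exp (-(b * enQ L (castV _ η))) * ((∏ t, vv 1 (1 / 2) (η t)) * fG (vv 1 (1 / 2)) L η) =
      (∏ t, vv 1 (Real.exp (-b) / 2) (η t)) * fG (vv 1 (Real.exp (-b) / 2)) L η := by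
  cases L with
  | zero =>
    have : castV (J 0) η = 0 := by funext t; exact t.elim
    rw [this, map_zero]
    have : IsEmpty (J 0) := (inferInstance : IsEmpty Empty)
    simp [fG]
  | succ L =>
    rw [enQ_succ, mul_add, neg_add, Real.exp_add, ← exp_fG, ← prod_exp]
    simp only [castV_apply]
    ring

/-! ### Part I: conclusion -/

theorem var_lower {β : ℝ} (hβ : 0 < β) (hβ1 : β < 1 / 1000000) (N K : ℕ) (hK : 3 ^ K ≤ 2 * N + 1) :
    (K / 6 : ℝ) ≤ chainVar N β 2 2 := by
  set b : ℝ := 9000 * β with hb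
  set κ : ℝ := β / (2 * N + 1) ^ 2 with hκ
  have hκ0 : 0 < κ := by positivity
  let R : QuadraticForm ℝ (J K → ℝ) := b • enQ K - β • QB.comp ((extL N).comp (gR K N))
  have hRa : ∀ f, R f = b * enQ K f - β * QB (extL N (gR K N f)) := by
    intro f; simp [R]
  have hR : ∀ f, 0 ≤ R f := by
    intro f
    rw [hRa]
    have := mul_le_mul_of_nonneg_left (QB_gR K N hK f) hβ.le
    rw [hb]; linarith
  have hRc : ∀ η : J K → ℤ, R (castV _ η) = b * enQ K (castV _ η) - QN β N (gZ K N η) := by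
    intro η; rw [hRa, QN, castV_gZ]
  let Q := QN β N
  have hQκ : ∀ φ, κ * ∑ i, ((φ i : ℤ) : ℝ) ^ 2 ≤ Q φ := fun φ => QN_coer hβ N φ
  let x : (SS N → ℤ) →+ ℝ := (Int.castAddHom ℝ).comp (Pi.evalAddMonoidHom (fun _ : SS N => ℤ) (i0 N))
  have hx : ∀ φ, x φ = (φ (i0 N) : ℝ) := fun φ => rfl
  have habs : ∀ y : ℝ, |y| ≤ 1 + y ^ 2 := fun y => by
    rw [← sq_abs y]; nlinarith [sq_nonneg (|y| - 1), abs_nonneg y]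
  have hs0 : Summable fun φ => Real.exp (-Q φ) := by
    have := summ_all hκ0 Q hQκ (fun _ => 1) (i0 N) (fun φ => by simp; positivity)
    simpa using this
  have hs1 : Summable fun φ => |x φ| * Real.exp (-(Q φ / 2)) := by
    refine summ_all (half_pos hκ0) (fun φ => Q φ / 2) (fun φ => ?_) (fun φ => |x φ|) (i0 N) (fun φ => ?_)
    · have := hQκ φ; linarith
    · rw [abs_abs, hx]; exact habs _
  have hs2 : Summable fun φ => x φ ^ 2 * Real.exp (-Q φ) := by
    refine summ_all hκ0 Q hQκ (fun φ => x φ ^ 2) (i0 N) (fun φ => ?_)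
    rw [abs_of_nonneg (sq_nonneg _), hx]; linarith
  have hpar : ∀ u w, QB (u + w) + QB (u - w) = 2 * QB u + 2 * QB w := by
    intro u w
    have h1 := QuadraticMap.map_add QB u w
    have h2 := QuadraticMap.map_add QB u (-w)
    rw [QuadraticMap.polar_neg_right, QuadraticMap.map_neg, ← sub_eq_add_neg] at h2
    rw [h1, h2]; ring
  let F : (J K → ℤ) → ℝ := fun η => Real.exp (-R (castV _ η)) *
    ((∏ t, vv 1 (1 / 2) (η t)) * fG (vv 1 (1 / 2)) K η)
  have key := ginibre (gZ K N) (by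
      intro a c h
      refine gZ_inj K N hK ?_
      funext i
      have := congrFun h i
      simp only [Pi.add_apply] at this
      omega) Q (by
      intro φ ψ
      simp only [Q, QN]
      rw [map_add, map_sub, map_add, map_sub, ← mul_add, hpar]; ring) x hs0 hs1 hs2
    F ((PDF.gauss R hR (castV _)).mul ((PDF_prod_vv K).mul (PDF_fG K))) (by
      intro η
      have h1 : Real.exp (-R (castV _ η)) ≤ 1 := by
        rw [Real.exp_le_one_iff]; linarith [hR (castV _ η)]
      obtain ⟨h2, h3⟩ := fG_bd K η
      have h4 : 0 ≤ ∏ t, vv 1 (1 / 2) (η t) := Finset.prod_nonneg fun _ _ => vv_nonneg _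
      have h5 : ∏ t, vv 1 (1 / 2) (η t) ≤ 1 := Finset.prod_le_one (fun _ _ => vv_nonneg _) fun _ _ => vv_le _
      rw [abs_of_nonneg (mul_nonneg (Real.exp_pos _).le (mul_nonneg h4 h2))]
      exact mul_le_one₀ h1 (mul_nonneg h4 h2) (mul_le_one₀ h5 h2 h3))
  set q := Real.exp (-b) with hq
  have hF : ∀ η, F η * Real.exp (-Q (gZ K N η)) = (∏ t, vv 1 (q / 2) (η t)) * fG (vv 1 (q / 2)) K η := by
    intro η
    rw [hq, ← exp_full]
    simp only [F, Q]
    rw [mul_right_comm, ← Real.exp_add, hRc]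
    congr 2; ring
  have e0 : ∑' η, F η * Real.exp (-Q (gZ K N η)) = Wt (vv 1 (q / 2)) (vv 1 (q / 2)) K (fun _ => 1) := by
    simp only [hF]
    rw [tsum_eq_sum (s := PJ K) (fun η h => prod_vv_off η h)]
    simp [Wt]
  have e2 : ∑' η, x (gZ K N η) ^ 2 * (F η * Real.exp (-Q (gZ K N η))) =
      Wt (vv 1 (q / 2)) (vv 1 (q / 2)) K (fun n => (n : ℝ) ^ 2) := by
    simp only [hF, hx, gZ_origin]
    rw [tsum_eq_sum (s := PJ K) (fun η h => by rw [prod_vv_off η h, mul_zero])]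
    rfl
  have hq1 : q ≤ 1 := by rw [hq, Real.exp_le_one_iff, hb]; linarith
  have hq2 : 0.95 ≤ q := by
    have := Real.add_one_le_exp (-b)
    rw [← hq] at this
    have : b ≤ 0.05 := by rw [hb]; linarith
    linarith
  obtain ⟨w1, w2⟩ := Wt_lower q hq2 hq1 K 1 (q / 2) one_pos (by linarith) (by linarith)
  rw [e0, e2] at key
  have hZ : 0 < ∑' φ, Real.exp (-Q φ) := hs0.tsum_pos (fun _ => (Real.exp_pos _).le) 0 (Real.exp_pos _)
  rw [chainVar_eq, le_div_iff₀ hZ]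
  have h5 := (mul_le_mul_of_nonneg_left w2 hZ.le).trans key
  refine le_of_mul_le_mul_right ?_ w1
  calc _ = (∑' φ, Real.exp (-Q φ)) * (K / 6 * Wt (vv 1 (q / 2)) (vv 1 (q / 2)) K (fun _ => 1)) := by ring
    _ ≤ _ := h5

theorem var_lower_log {β : ℝ} (hβ : 0 < β) (hβ1 : β < 1 / 1000000) (N : ℕ) (hN : 2 ≤ N) :
    1 / (12 * Real.log 3) * Real.log N ≤ chainVar N β 2 2 := by
  have hK := Nat.pow_log_le_self 3 (show 2 * N + 1 ≠ 0 by omega)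
  refine le_trans ?_ (var_lower hβ hβ1 N _ hK)
  set K := Nat.log 3 (2 * N + 1)
  have hK1 : 1 ≤ K := Nat.log_pos (by norm_num) (by omega)
  have hK1' : (1 : ℝ) ≤ K := by exact_mod_cast hK1
  have h3 : N ≤ 3 ^ (K + 1) := by
    have := Nat.lt_pow_succ_log_self (b := 3) (by norm_num) (2 * N + 1)
    have h : 2 * N + 1 < 3 ^ (K + 1) := this
    omega
  have h3' : (N : ℝ) ≤ 3 ^ (K + 1) := by exact_mod_cast h3
  have hN0 : (0 : ℝ) < N := by positivity
  have h4 := Real.log_le_log hN0 h3'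
  rw [Real.log_pow] at h4
  have hl : 0 < Real.log 3 := Real.log_pos (by norm_num)
  rw [one_div_mul_eq_div, div_le_iff₀ (by positivity)]
  push_cast at h4
  nlinarith

/-- **Logarithmic delocalisation of the discrete Gaussian long-range chain at `α = 2`,
high temperature.** There exists `β₀ > 0` such that for every `β ∈ (0,β₀)` there exist
constants `c_β > 0` and `C_β < ∞` such that for every `N ≥ 2`,
`c_β ln N ≤ Var_{N,β,2}[φ(0)] ≤ C_β ln N`. -/
theorem gaussian_chain_log_deloc_alpha_eq_two :
    ∃ β₀ : ℝ, 0 < β₀ ∧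
      ∀ β : ℝ, 0 < β → β < β₀ →
        ∃ c C : ℝ, 0 < c ∧
          ∀ N : ℕ, 2 ≤ N →
            c * Real.log N ≤ chainVar N β 2 2 ∧
              chainVar N β 2 2 ≤ C * Real.log N := by
  refine ⟨1 / 1000000, by norm_num, fun β h0 h1 => ⟨1 / (12 * Real.log 3), 180 / β, ?_, fun N hN =>
    ⟨var_lower_log h0 h1 N hN, var_upper_log h0 N hN⟩⟩⟩
  have hl : 0 < Real.log 3 := Real.log_pos (by norm_num)
  positivity
end
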